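/- arXiv:math/0512295 — 7 statements merged into one kernel-verified Lean document; each statement's English description precedes it below -/
import Mathlib

section
/- Let q be an odd prime power and n ≥ 2 an even integer. For every matrix h ∈ GL_n(F_q) satisfying hᵗ = h or hᵗ = −h, there exist g ∈ GL_n(F_q) and a non-square α ∈ F_q^× (i.e. α is not the square of any element of F_q^×) such that g·h·gᵗ = α·h. -/
/-!
View `h` as the bilinear form `B(x, y) = xᵗ h y` on `F ^ n` and fix a non-square `α`. It suffices
to find a linear endomorphism `f` with `B(f x, f y) = α B(x, y)`: comparing determinants, such an
`f` is invertible because `B` is nondegenerate, and `g` is the transpose of its matrix.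

* If `B` is alternating (`exists_similitude_of_isAlt`), split off hyperbolic planes: when
  `B(x, y) = 1`, let `f` act on the plane by `x ↦ α x`, `y ↦ y`, and use induction on the
  orthogonal complement of the plane.
* If `B` is symmetric (`exists_similitude_of_isSymm`), take an orthogonal basis and group it into
  pairs `(e, e')` with `B(e, e) = a`, `B(e', e') = b`. Over a finite field of odd order the
  nondegenerate binary form `a X² + b Y²` is universal, so `a x² + b y² = α a` for some `x`, `y`;
  then `e ↦ x e + y e'`, `e' ↦ -(b y / a) e + x e'` multiplies the form on the plane by `α`.
-/

open Matrix
open Module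
open LinearMap (BilinForm)

/-- An alternating form, possibly degenerate, admits similitudes of every multiplier. They are
only claimed to be linear maps; in particular `f = 0` serves for the zero form. -/
lemma exists_similitude_of_isAlt {F : Type*} [Field F] (α : F) :
    ∀ (d : ℕ) (V : Type) [AddCommGroup V] [Module F V] [FiniteDimensional F V]
      (B : BilinForm F V), B.IsAlt → finrank F V = d →
      ∃ f : V →ₗ[F] V, ∀ v w, B (f v) (f w) = α * B v w := by
  intro d
  induction d using Nat.strong_induction_on with
  | _ d ih =>
  intro V _ _ _ B hB hd
  by_cases h0 : ∀ x y, B x y = 0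
  · exact ⟨0, fun v w => by simp [h0]⟩
  push Not at h0
  obtain ⟨x, y', hxy'⟩ := h0
  obtain ⟨y, hxy⟩ : ∃ y, B x y = 1 := ⟨(B x y')⁻¹ • y', by simp [hxy']⟩
  have hskew : ∀ v w, B w v = -B v w := fun v w => (LinearMap.IsAlt.neg hB v w).symm
  have hyx : B y x = -1 := by rw [hskew x y, hxy]
  have hxx : B x x = 0 := hB x
  have hyy : B y y = 0 := hB y
  let W : Submodule F V := LinearMap.ker (B x) ⊓ LinearMap.ker (B y)
  have hWx : ∀ w ∈ W, B x w = 0 := fun w hw => hw.1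
  have hWy : ∀ w ∈ W, B y w = 0 := fun w hw => hw.2
  have hW'x : ∀ w ∈ W, B w x = 0 := fun w hw => by rw [hskew x w, hWx w hw, neg_zero]
  have hW'y : ∀ w ∈ W, B w y = 0 := fun w hw => by rw [hskew y w, hWy w hw, neg_zero]
  have hlt : finrank F W < d := by
    rw [← hd]
    refine Submodule.finrank_lt ?_
    intro htop
    have hy : y ∈ W := htop ▸ Submodule.mem_top
    exact one_ne_zero (hxy.symm.trans (hWx y hy))
  obtain ⟨f, hf⟩ := ih _ hlt W (B.restrict W) (fun w => hB w) rfl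
  -- the orthogonal projection of `V` onto `W`, the complement of the plane spanned by `x`, `y`
  let P₀ : V →ₗ[F] V :=
    LinearMap.id - (B.flip y).smulRight x + (B.flip x).smulRight y
  have hP₀ : ∀ v, P₀ v = v - B v y • x + B v x • y := fun v => by simp [P₀]
  have hP₀W : ∀ v, P₀ v ∈ W := by
    intro v
    refine ⟨?_, ?_⟩
    · simp [hP₀, hxx, hxy, hskew v x]
    · simp [hP₀, hyx, hyy, hskew v y]
  let P : V →ₗ[F] W := P₀.codRestrict W hP₀W
  refine ⟨α • (B.flip y).smulRight x - (B.flip x).smulRight y + W.subtype ∘ₗ f ∘ₗ P, ?_⟩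
  intro v w
  have key : B (f (P v) : V) (f (P w) : V) = α * B (P₀ v) (P₀ w) := hf (P v) (P w)
  have k1 := hWx _ (f (P w)).2
  have k2 := hWy _ (f (P w)).2
  have k3 := hW'x _ (f (P v)).2
  have k4 := hW'y _ (f (P v)).2
  have k5 : B x w = - B w x := hskew w x
  have k6 : B y w = - B w y := hskew w y
  simp only [hP₀] at key
  simp [key, k1, k2, k3, k4, k5, k6, hxx, hyy, hxy, hyx]
  ring

/-- Nondegenerate binary diagonal forms over a finite field of odd order are universal. -/
lemma exists_binary_represents {F : Type*} [Field F] [Fintype F] (hodd : Odd (Fintype.card F))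
    {a b : F} (ha : a ≠ 0) (hb : b ≠ 0) (c : F) : ∃ x y : F, a * x ^ 2 + b * y ^ 2 = c := by
  open Polynomial in
  obtain ⟨x, y, hxy⟩ := FiniteField.exists_root_sum_quadratic
    (f := C a * X ^ 2 + C 0 * X + C (-c)) (g := C b * X ^ 2 + C 0 * X + C 0)
    (degree_quadratic ha) (degree_quadratic hb) (Nat.odd_iff.mp hodd)
  refine ⟨x, y, ?_⟩
  simp at hxy
  linear_combination hxy

lemma exists_similitude_of_isSymm {F : Type*} [Field F] [Fintype F]
    (hodd : Odd (Fintype.card F)) (h2 : (2 : F) ≠ 0) {V : Type*} [AddCommGroup V] [Module F V]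
    [FiniteDimensional F V] (hV : Even (finrank F V)) (B : BilinForm F V) (hB : LinearMap.IsSymm B)
    (hnd : B.Nondegenerate) (α : F) :
    ∃ f : V →ₗ[F] V, ∀ v w, B (f v) (f w) = α * B v w := by
  have : Invertible (2 : F) := invertibleOfNonzero h2
  obtain ⟨u, hu⟩ := LinearMap.BilinForm.exists_orthogonal_basis hB
  have hune := LinearMap.IsOrthoᵢ.not_isOrtho_basis_self_of_separatingLeft hu hnd.1
  obtain ⟨m, hm⟩ := hV
  let e : Fin (finrank F V) ≃ Fin m ⊕ Fin m := (finCongr hm).trans finSumFinEquiv.symm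
  let v := u.reindex e
  have hv : ∀ s t, s ≠ t → B (v s) (v t) = 0 := by
    intro s t hst
    simp only [v, Basis.reindex_apply]
    exact hu (e.symm.injective.ne hst)
  have hvne : ∀ s, B (v s) (v s) ≠ 0 := by
    intro s
    simp only [v, Basis.reindex_apply]
    exact hune _
  choose x y hxy using fun i : Fin m => exists_binary_represents hodd (hvne (.inl i))
    (hvne (.inr i)) (α * B (v (.inl i)) (v (.inl i)))
  let f : V →ₗ[F] V := v.constr F (Sum.elim
    (fun i => x i • v (.inl i) + y i • v (.inr i))
    (fun i => -(B (v (.inr i)) (v (.inr i)) * y i / B (v (.inl i)) (v (.inl i))) • v (.inl i)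
      + x i • v (.inr i)))
  have hfl : ∀ i, f (v (.inl i)) = x i • v (.inl i) + y i • v (.inr i) := fun i => by
    simp [f]
  have hfr : ∀ i, f (v (.inr i)) =
      -(B (v (.inr i)) (v (.inr i)) * y i / B (v (.inl i)) (v (.inl i))) • v (.inl i)
      + x i • v (.inr i) := fun i => by
    simp [f]
  refine ⟨f, fun p q => ?_⟩
  suffices hform : B.comp f f = α • B by
    simpa using LinearMap.congr_fun₂ hform p q
  refine v.ext fun s => v.ext fun t => ?_
  have hlr : ∀ i j, B (v (.inl i)) (v (.inr j)) = 0 := fun i j => hv _ _ (by simp)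
  have hrl : ∀ i j, B (v (.inr i)) (v (.inl j)) = 0 := fun i j => hv _ _ (by simp)
  have hll : ∀ i j, i ≠ j → B (v (.inl i)) (v (.inl j)) = 0 := fun i j h => hv _ _ (by simpa)
  have hrr : ∀ i j, i ≠ j → B (v (.inr i)) (v (.inr j)) = 0 := fun i j h => hv _ _ (by simpa)
  rcases s with i | i <;> rcases t with j | j <;> by_cases hij : i = j
  all_goals
    first
    | subst hij
      have hi := hxy i
      have ha := hvne (.inl i)
      simp only [BilinForm.comp_apply, LinearMap.smul_apply, hfl, hfr, map_add, map_smul,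
        LinearMap.add_apply, hlr, hrl, smul_eq_mul]
      field_simp
      grind
    | simp [hfl, hfr, hlr, hrl, hll i j hij, hrr i j hij]

/-- Let `q` be an odd prime power and `n ≥ 2` an even integer. For every
`h ∈ GL_n(F_q)` with `hᵗ = h` or `hᵗ = -h`, there exist `g ∈ GL_n(F_q)` and a non-square
`α ∈ F_q^×` such that `g·h·gᵗ = α·h`.  (Here `F` is a finite field of odd cardinality,
playing the role of `F_q`.) -/
theorem exists_nonsquare_similitude
    (F : Type) [Field F] [Fintype F] (hodd : Odd (Fintype.card F))
    (n : ℕ) (hn2 : 2 ≤ n) (hneven : Even n) (h : GL (Fin n) F)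
    (hsymm : (↑h : Matrix (Fin n) (Fin n) F)ᵀ = (↑h : Matrix (Fin n) (Fin n) F) ∨
             (↑h : Matrix (Fin n) (Fin n) F)ᵀ = -(↑h : Matrix (Fin n) (Fin n) F)) :
    ∃ (g : GL (Fin n) F) (α : Fˣ), (¬ ∃ β : Fˣ, β ^ 2 = α) ∧
      (↑g : Matrix (Fin n) (Fin n) F) * (↑h : Matrix (Fin n) (Fin n) F) *
        (↑g : Matrix (Fin n) (Fin n) F)ᵀ = (α : F) • (↑h : Matrix (Fin n) (Fin n) F) := by
  have hchar : ringChar F ≠ 2 := by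
    intro hc
    have := FiniteField.even_card_of_char_two hc
    have := Nat.odd_iff.mp hodd
    omega
  have h2 : (2 : F) ≠ 0 := Ring.two_ne_zero hchar
  obtain ⟨α, hα⟩ := FiniteField.exists_nonsquare hchar
  have hα0 : α ≠ 0 := by
    rintro rfl
    exact hα IsSquare.zero
  have hdet : (h : Matrix (Fin n) (Fin n) F).det ≠ 0 :=
    ((Matrix.isUnit_iff_isUnit_det _).mp h.isUnit).ne_zero
  generalize (h : Matrix (Fin n) (Fin n) F) = H at *
  have hex : ∃ f : (Fin n → F) →ₗ[F] (Fin n → F),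
      ∀ v w, H.toBilin' (f v) (f w) = α * H.toBilin' v w := by
    rcases hsymm with hs | hs
    · refine exists_similitude_of_isSymm hodd h2 (by simpa using hneven) _ ?_ ?_ α
      · exact ⟨(Matrix.isSymm_toBilin'_iff_isSymm.mpr hs).eq⟩
      · exact LinearMap.BilinForm.nondegenerate_toBilin'_iff_det_ne_zero.mpr hdet
    · refine exists_similitude_of_isAlt α _ _ _ ?_ rfl
      intro v
      -- transposing the scalar `vᵗ H v` shows that it equals its own negative
      have hneg : H.toBilin' v v = -H.toBilin' v v := by
        simp only [Matrix.toBilin'_apply']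
        conv_lhs => rw [Matrix.dotProduct_mulVec, ← Matrix.mulVec_transpose, hs, dotProduct_comm]
        simp [Matrix.neg_mulVec]
      have : 2 * H.toBilin' v v = 0 := by linear_combination hneg
      exact (mul_eq_zero.mp this).resolve_left h2
  obtain ⟨f, hf⟩ := hex
  have hM : (LinearMap.toMatrix' f)ᵀ * H * LinearMap.toMatrix' f = α • H := by
    apply Matrix.toBilin'.injective
    rw [← Matrix.toBilin'_comp, Matrix.toLin'_toMatrix', map_smul]
    refine LinearMap.ext₂ fun v w => ?_
    simpa using hf v w
  have hMdet : (LinearMap.toMatrix' f)ᵀ.det ≠ 0 := by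
    intro h0
    have := congrArg Matrix.det hM
    rw [Matrix.det_mul, Matrix.det_mul, h0, Matrix.det_smul] at this
    simp [hα0, hdet] at this
  refine ⟨Matrix.GeneralLinearGroup.mkOfDetNeZero _ hMdet, Units.mk0 α hα0, ?_, ?_⟩
  · rintro ⟨β, hβ⟩
    refine hα ⟨β, ?_⟩
    rw [← sq]
    simpa using (congrArg Units.val hβ).symm
  · simpa [Matrix.GeneralLinearGroup.mkOfDetNeZero] using hM
end

section
/- Let q be an odd prime power and n ≥ 2 an even integer. For symmetric matrices h, h' ∈ GL_n(F_q) (hᵗ = h, h'ᵗ = h'), there exist g ∈ GL_n(F_q) and α ∈ F_q^× with g·h·gᵗ = α·h' if and only if det(h)·det(h')⁻¹ is a square in F_q^×. -/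
open Matrix

/-!
Over a finite field of odd order a nondegenerate symmetric matrix is determined up to congruence
by its determinant modulo squares, so `α = 1` already suffices for the converse direction.

Every symmetric matrix is congruent to a diagonal one (`SymmCongr.exists_diagonal`, an orthogonal
basis). Since `u x² + v y² = w` is solvable for nonzero `u`, `v`, the block `diag(u, v)` is
congruent to `diag(w, u v / w)`; hence two diagonal entries may be replaced by any two nonzero
entries with the same product (`SymmCongr.diagonal_pair`). Collecting all the entries at one index
`i₀` brings the matrix to the form `diag(d, 1, …, 1)` (`SymmCongr.diagonal_collect`), where `d`
only matters modulo squares.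

In the forward direction, determinants give `det(g)² det(h) = αⁿ det(h')`, and `αⁿ` is a square
because `n` is even.
-/

/-- Congruence of square matrices: `N = g M gᵗ` for some invertible `g`. -/
def SymmCongr {ι F : Type*} [Fintype ι] [DecidableEq ι] [Field F] (M N : Matrix ι ι F) : Prop :=
  ∃ g : GL ι F, (g : Matrix ι ι F) * M * (g : Matrix ι ι F)ᵀ = N

namespace SymmCongr

variable {ι F : Type*} [Fintype ι] [DecidableEq ι] [Field F] {M N K : Matrix ι ι F}

lemma refl (M : Matrix ι ι F) : SymmCongr M M := ⟨1, by simp⟩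

lemma symm (h : SymmCongr M N) : SymmCongr N M := by
  obtain ⟨g, rfl⟩ := h
  refine ⟨g⁻¹, ?_⟩
  have h1 : ((g⁻¹ : GL ι F) : Matrix ι ι F) * (g : Matrix ι ι F) = 1 := by
    rw [← Units.val_mul]; simp
  have h2 : (g : Matrix ι ι F)ᵀ * ((g⁻¹ : GL ι F) : Matrix ι ι F)ᵀ = 1 := by
    rw [← transpose_mul, h1, transpose_one]
  calc _ = (((g⁻¹ : GL ι F) : Matrix ι ι F) * (g : Matrix ι ι F)) * M *
        ((g : Matrix ι ι F)ᵀ * ((g⁻¹ : GL ι F) : Matrix ι ι F)ᵀ) := by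
        simp only [Matrix.mul_assoc]
    _ = M := by rw [h1, h2]; simp

lemma trans (h : SymmCongr M N) (h' : SymmCongr N K) : SymmCongr M K := by
  obtain ⟨g, rfl⟩ := h
  obtain ⟨g', rfl⟩ := h'
  exact ⟨g' * g, by simp only [Units.val_mul, transpose_mul, Matrix.mul_assoc]⟩

/-- The transforming matrix is automatically invertible when the target is. -/
lemma of_eq (P : Matrix ι ι F) (h : P * M * Pᵀ = N) (hN : N.det ≠ 0) : SymmCongr M N := by
  have hP : P.det ≠ 0 := by
    intro h0
    apply hN
    rw [← h, det_mul, det_mul, h0]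
    simp
  exact ⟨GeneralLinearGroup.mkOfDetNeZero P hP, h⟩

lemma det_eq (h : SymmCongr M N) : ∃ c : F, c ≠ 0 ∧ N.det = c ^ 2 * M.det := by
  obtain ⟨g, rfl⟩ := h
  refine ⟨(g : Matrix ι ι F).det, (g.isUnit.map detMonoidHom).ne_zero, ?_⟩
  rw [det_mul, det_mul, det_transpose]
  ring

lemma mul_diagonal_mul_transpose_apply (P : Matrix ι ι F) (a : ι → F) (k l : ι) :
    (P * diagonal a * Pᵀ) k l = P k ⬝ᵥ (fun m => a m * P l m) := by
  rw [Matrix.mul_apply]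
  simp only [mul_diagonal, transpose_apply, dotProduct, mul_assoc]

/-- Two diagonal entries can be traded for any two nonzero entries with the same product, because
a nondegenerate binary form over a finite field of odd order represents every nonzero element. -/
lemma diagonal_pair [Fintype F] (hF : Odd (Fintype.card F)) {a b : ι → F} {i j : ι} (hij : i ≠ j)
    (ha : ∀ k, a k ≠ 0) (hb : ∀ k, b k ≠ 0) (hprod : a i * a j = b i * b j)
    (hab : ∀ k, k ≠ i → k ≠ j → b k = a k) : SymmCongr (diagonal a) (diagonal b) := by
  obtain ⟨x, y, hxy⟩ : ∃ x y : F, a i * x ^ 2 + a j * y ^ 2 = b i := by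
    obtain ⟨x, y, hxy⟩ := FiniteField.exists_root_sum_quadratic
      (f := Polynomial.C (a i) * Polynomial.X ^ 2)
      (g := Polynomial.C (a j) * Polynomial.X ^ 2 - Polynomial.C (b i))
      (Polynomial.degree_C_mul_X_pow 2 (ha i))
      (by
        rw [Polynomial.degree_sub_C]
        · exact Polynomial.degree_C_mul_X_pow 2 (ha j)
        · rw [Polynomial.degree_C_mul_X_pow 2 (ha j)]; norm_num)
      (Nat.odd_iff.mp hF)
    exact ⟨x, y, by simp at hxy; linear_combination hxy⟩
  -- The second row is orthogonal to `x eᵢ + y eⱼ`, scaled so that the block has determinant one.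
  let P : Matrix ι ι F := fun k =>
    if k = i then Pi.single i x + Pi.single j y
    else if k = j then Pi.single i (-(a j * y / b i)) + Pi.single j (a i * x / b i)
    else Pi.single k 1
  have hbi := hb i
  refine of_eq P ?_ (by
    rw [det_diagonal]; exact Finset.prod_ne_zero_iff.mpr fun k _ => hb k)
  have hji := hij.symm
  have hbj : b j = a i * a j / b i := by rw [hprod]; field_simp
  ext k l
  rw [mul_diagonal_mul_transpose_apply]
  by_cases hki : k = i
  · subst hki
    by_cases hli : l = k
    · subst hli
      simp [P, add_dotProduct, hij, hji]
      linear_combination hxy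
    · by_cases hlj : l = j
      · subst hlj
        simp [P, add_dotProduct, hij, hji]
        field_simp
        ring
      · simp [P, add_dotProduct, hli, hlj, Ne.symm hli, Ne.symm hlj]
  · by_cases hkj : k = j
    · subst hkj
      by_cases hli : l = i
      · subst hli
        simp [P, add_dotProduct, hij, hji]
        field_simp
        ring
      · by_cases hlj : l = k
        · subst hlj
          simp [P, add_dotProduct, hij, hji]
          rw [hbj]
          field_simp
          linear_combination a i * a l * hxy
        · simp [P, add_dotProduct, hji, hli, hlj, Ne.symm hli, Ne.symm hlj]
    · by_cases hli : l = i
      · subst hli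
        simp [P, hki, hkj]
      · by_cases hlj : l = j
        · subst hlj
          simp [P, hji, hki, hkj]
        · by_cases hkl : k = l
          · subst hkl
            simp [P, hki, hkj, hab k hki hkj]
          · simp [P, hki, hkj, hli, hlj, hkl]

/-- The product of the entries over `s` can be moved to the entry at `i₀`. -/
lemma diagonal_collect [Fintype F] (hF : Odd (Fintype.card F)) {a : ι → F} (ha : ∀ k, a k ≠ 0)
    (i₀ : ι) (s : Finset ι) (hs : i₀ ∉ s) :
    SymmCongr (diagonal a)
      (diagonal fun k => if k = i₀ then a i₀ * ∏ m ∈ s, a m else if k ∈ s then 1 else a k) := by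
  induction s using Finset.induction_on with
  | empty =>
    convert refl (diagonal a) using 3 with k
    by_cases hk : k = i₀ <;> simp [hk]
  | insert j s hj ih =>
    have hne : ∀ t : Finset ι, a i₀ * ∏ m ∈ t, a m ≠ 0 := fun t =>
      mul_ne_zero (ha _) (Finset.prod_ne_zero_iff.mpr fun k _ => ha k)
    have hji : j ≠ i₀ := by rintro rfl; simp at hs
    refine (ih (by simp_all)).trans (diagonal_pair hF hji.symm ?_ ?_ ?_ ?_)
    · intro k
      split_ifs
      exacts [hne s, one_ne_zero, ha k]
    · intro k
      split_ifs
      exacts [hne _, one_ne_zero, ha k]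
    · simp [hji, hj, Finset.prod_insert hj]
      ring
    · intro k hk hkj
      simp [hk, hkj]

lemma exists_diagonal {n : ℕ} (h2 : (2 : F) ≠ 0) (M : Matrix (Fin n) (Fin n) F)
    (hM : Mᵀ = M) : ∃ a, SymmCongr M (diagonal a) := by
  have : Invertible (2 : F) := invertibleOfNonzero h2
  have hB : LinearMap.IsSymm (Matrix.toBilin' M) := by
    constructor
    intro x y
    simp only [Matrix.toBilin'_apply', RingHom.id_apply]
    rw [dotProduct_mulVec, ← mulVec_transpose, hM, dotProduct_comm]
  obtain ⟨v, hv⟩ := LinearMap.BilinForm.exists_orthogonal_basis hB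
  have hfin : Module.finrank F (Fin n → F) = n := by simp
  let w := v.reindex (finCongr hfin)
  let P : Matrix (Fin n) (Fin n) F := fun i => w i
  have hP : IsUnit P := linearIndependent_rows_iff_isUnit.mp w.linearIndependent
  refine ⟨fun i => (P * M * Pᵀ) i i, hP.unit, ?_⟩
  ext i j
  by_cases hij : i = j
  · subst hij; simp
  · rw [diagonal_apply_ne _ hij]
    have h0 := hv (i := (finCongr hfin).symm i) (j := (finCongr hfin).symm j) (by simpa using hij)
    have h1 : Matrix.toBilin' M (w i) (w j) = 0 := by simpa [w] using h0
    rw [Matrix.toBilin'_apply', dotProduct_mulVec] at h1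
    rw [IsUnit.unit_spec]
    exact h1

/-- The normal form `diag(d, 1, …, 1)`, with `d` at an arbitrary index `i₀`. -/
lemma exists_normalForm [Fintype F] (hF : Odd (Fintype.card F)) {n : ℕ} (h2 : (2 : F) ≠ 0)
    (M : Matrix (Fin n) (Fin n) F) (hM : Mᵀ = M) (hdet : M.det ≠ 0) (i₀ : Fin n) :
    ∃ d : F, SymmCongr M (diagonal fun k => if k = i₀ then d else 1) := by
  obtain ⟨a, ha⟩ := exists_diagonal h2 M hM
  have hne : ∀ k, a k ≠ 0 := by
    obtain ⟨c, hc, hd⟩ := ha.det_eq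
    rw [det_diagonal] at hd
    have : ∏ k, a k ≠ 0 := by rw [hd]; exact mul_ne_zero (pow_ne_zero _ hc) hdet
    exact fun k => Finset.prod_ne_zero_iff.mp this k (Finset.mem_univ k)
  refine ⟨a i₀ * ∏ m ∈ Finset.univ.erase i₀, a m, ha.trans ?_⟩
  convert diagonal_collect hF hne i₀ (Finset.univ.erase i₀) (by simp) using 3 with k
  by_cases hk : k = i₀ <;> simp [hk]

/-- Nondegenerate symmetric matrices whose determinants agree modulo squares are congruent. -/
lemma of_det [Fintype F] (hF : Odd (Fintype.card F)) {n : ℕ} (hn : 0 < n) (h2 : (2 : F) ≠ 0)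
    (M N : Matrix (Fin n) (Fin n) F) (hM : Mᵀ = M) (hN : Nᵀ = N) (hdM : M.det ≠ 0)
    (hdN : N.det ≠ 0) {c : F} (hc : c ≠ 0) (hdet : N.det = c ^ 2 * M.det) : SymmCongr M N := by
  obtain ⟨d, hd⟩ := exists_normalForm hF h2 M hM hdM ⟨0, hn⟩
  obtain ⟨e, he⟩ := exists_normalForm hF h2 N hN hdN ⟨0, hn⟩
  refine hd.trans (SymmCongr.trans ?_ he.symm)
  obtain ⟨u, hu, hdu⟩ := hd.det_eq
  obtain ⟨v, hv, hev⟩ := he.det_eq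
  have hne := mul_ne_zero (pow_ne_zero 2 hv) hdN
  rw [← hev] at hne
  refine of_eq (diagonal fun k => if k = ⟨0, hn⟩ then v * c / u else 1) ?_ hne
  simp only [det_diagonal, Finset.prod_ite_eq', Finset.mem_univ, if_true] at hdu hev
  rw [diagonal_transpose, diagonal_mul_diagonal, diagonal_mul_diagonal]
  congr 1
  ext k
  by_cases hk : k = ⟨0, hn⟩
  · simp only [hk, if_true]
    rw [hdu, hev, hdet]
    field_simp
  · simp [hk]

end SymmCongr



/-- Let `q` be an odd prime power and `n ≥ 2` even. For symmetric
`h, h' ∈ GL_n(F_q)`, there exist `g ∈ GL_n(F_q)` and `α ∈ F_q^×` with `g·h·gᵗ = α·h'` if and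
only if `det(h)·det(h')⁻¹` is a square in `F_q^×`. -/
theorem even_dim_symmetric_equiv_iff_det_ratio_square
    (F : Type) [Field F] [Fintype F] (hodd : Odd (Fintype.card F))
    (n : ℕ) (hn2 : 2 ≤ n) (hneven : Even n) (h h' : GL (Fin n) F)
    (hsymm : (↑h : Matrix (Fin n) (Fin n) F)ᵀ = (↑h : Matrix (Fin n) (Fin n) F))
    (hsymm' : (↑h' : Matrix (Fin n) (Fin n) F)ᵀ = (↑h' : Matrix (Fin n) (Fin n) F)) :
    (∃ (g : GL (Fin n) F) (α : Fˣ),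
      (↑g : Matrix (Fin n) (Fin n) F) * (↑h : Matrix (Fin n) (Fin n) F) *
        (↑g : Matrix (Fin n) (Fin n) F)ᵀ = (α : F) • (↑h' : Matrix (Fin n) (Fin n) F)) ↔
    (∃ β : Fˣ, (β : F) ^ 2 =
      (↑h : Matrix (Fin n) (Fin n) F).det * ((↑h' : Matrix (Fin n) (Fin n) F).det)⁻¹) := by

  have hdh : (↑h : Matrix (Fin n) (Fin n) F).det ≠ 0 := (h.isUnit.map detMonoidHom).ne_zero
  have hdh' : (↑h' : Matrix (Fin n) (Fin n) F).det ≠ 0 := (h'.isUnit.map detMonoidHom).ne_zero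
  constructor
  · rintro ⟨g, α, hg⟩
    have hdg : (↑g : Matrix (Fin n) (Fin n) F).det ≠ 0 := (g.isUnit.map detMonoidHom).ne_zero
    obtain ⟨k, rfl⟩ := hneven
    have hd := congrArg det hg
    rw [det_mul, det_mul, det_transpose, det_smul, Fintype.card_fin] at hd
    refine ⟨α ^ k * (Units.mk0 _ hdg)⁻¹, ?_⟩
    push_cast
    rw [Units.val_mk0]
    field_simp
    rw [pow_add] at hd
    linear_combination -hd
  · rintro ⟨β, hβ⟩
    have h2 : (2 : F) ≠ 0 := by
      apply Ring.two_ne_zero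
      intro hc
      have := FiniteField.even_card_of_char_two hc
      rw [Nat.odd_iff] at hodd
      omega
    have hβ0 : (β : F) ≠ 0 := β.ne_zero
    obtain ⟨g, hg⟩ := SymmCongr.of_det hodd (by omega) h2 _ _ hsymm hsymm' hdh hdh'
      (c := (β : F)⁻¹) (inv_ne_zero hβ0) (by
        rw [inv_pow, hβ]
        field_simp)
    exact ⟨g, 1, by simpa using hg⟩
end

section
/- Let q be an odd prime power and n ≥ 2 an even integer. The action of PGL_n(F_q) on the set X = {h̄ : h ∈ GL_n(F_q), hᵗ = h or hᵗ = −h} of scalar-equivalence classes of nondegenerate symmetric and skew-symmetric matrices, given by ḡ·h̄ = (g·h·gᵗ)‾, has exactly three orbits: (i) the classes of skew-symmetric h, (ii) the classes of symmetric h with det(h) a square in F_q^×, and (iii) the classes of symmetric h with det(h) a non-square in F_q^×. -/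
/-!
Two matrices in one orbit have the same parity, and comparing determinants in
`g * h * gᵗ = α • h'` gives `det h = (α ^ n / (det g) ^ 2) * det h'`, a square multiple of `det h'`
because `n` is even. Conversely, two nondegenerate skew-symmetric matrices of the same size, or two
nondegenerate symmetric matrices of the same size whose determinants differ by a square, are
congruent, so that `α = 1` suffices:

* skew-symmetric (`MatCong.of_skew`): a nonzero entry `a` at `(i, j)` spans an invertible block
  `!![0, a; -a, 0]`, congruent to `!![0, 1; -1, 0]`; its Schur complement (`MatCong.schur`) is again
  skew-symmetric and nondegenerate, and induction on the size applies;
* symmetric (`MatCong.of_symm`): an orthogonal basis makes the matrix diagonal, and since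
  `a * x ^ 2 + b * y ^ 2 = 1` is solvable over a finite field of odd order, `diag(a, b)` is congruent
  to `diag(1, a * b)`. Repeating this collects the whole determinant in one diagonal entry
  (`MatCong.diagonal_collect`), which is determined up to squares.

Congruence is set up between matrices with possibly different index types, so that reindexing and
passing to a block decomposition are themselves congruences.
-/

open Matrix

/-! ### Congruence of matrices -/

/-- `MatCong A B` means that `B = g * A * gᵗ` for some invertible `g`. The index types of `A` and `B`
may differ, so invertibility of `g` is expressed by an explicit two-sided inverse `g'`. -/
def MatCong {F ι κ : Type} [Field F] [Fintype ι] [DecidableEq ι] [Fintype κ] [DecidableEq κ]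
    (A : Matrix ι ι F) (B : Matrix κ κ F) : Prop :=
  ∃ (g : Matrix κ ι F) (g' : Matrix ι κ F), g * g' = 1 ∧ g' * g = 1 ∧ g * A * gᵀ = B

namespace MatCong

variable {F ι κ μ ν : Type} [Field F] [Fintype ι] [DecidableEq ι] [Fintype κ] [DecidableEq κ]
  [Fintype μ] [DecidableEq μ] [Fintype ν] [DecidableEq ν]

theorem refl (A : Matrix ι ι F) : MatCong A A := ⟨1, 1, by simp, by simp, by simp⟩

theorem symm {A : Matrix ι ι F} {B : Matrix κ κ F} (h : MatCong A B) : MatCong B A := by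
  obtain ⟨g, g', h1, h2, rfl⟩ := h
  refine ⟨g', g, h2, h1, ?_⟩
  have h3 : gᵀ * g'ᵀ = 1 := by rw [← transpose_mul, h2, transpose_one]
  calc g' * (g * A * gᵀ) * g'ᵀ = (g' * g) * A * (gᵀ * g'ᵀ) := by simp only [Matrix.mul_assoc]
    _ = A := by rw [h2, h3, Matrix.one_mul, Matrix.mul_one]

theorem trans {A : Matrix ι ι F} {B : Matrix κ κ F} {C : Matrix μ μ F}
    (h : MatCong A B) (h' : MatCong B C) : MatCong A C := by
  obtain ⟨g, g', h1, h2, rfl⟩ := h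
  obtain ⟨k, k', h3, h4, rfl⟩ := h'
  refine ⟨k * g, g' * k', ?_, ?_, ?_⟩
  · calc k * g * (g' * k') = k * (g * g') * k' := by simp only [Matrix.mul_assoc]
      _ = 1 := by rw [h1, Matrix.mul_one, h3]
  · calc g' * k' * (k * g) = g' * (k' * k) * g := by simp only [Matrix.mul_assoc]
      _ = 1 := by rw [h4, Matrix.mul_one, h2]
  · simp only [transpose_mul, Matrix.mul_assoc]

theorem reindex (A : Matrix ι ι F) (e : κ ≃ ι) : MatCong A (A.submatrix e e) := by
  refine ⟨(1 : Matrix ι ι F).submatrix e id, (1 : Matrix ι ι F).submatrix id e, ?_, ?_, ?_⟩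
  · ext i j
    simp [Matrix.mul_apply, Matrix.one_apply]
  · simp
  · ext i j
    simp [Matrix.mul_apply, Matrix.one_apply]

theorem fromBlocks {A : Matrix ι ι F} {B : Matrix κ κ F} {C : Matrix μ μ F} {D : Matrix ν ν F}
    (h : MatCong A B) (h' : MatCong C D) :
    MatCong (Matrix.fromBlocks A 0 0 C) (Matrix.fromBlocks B 0 0 D) := by
  obtain ⟨g, g', h1, h2, rfl⟩ := h
  obtain ⟨k, k', h3, h4, rfl⟩ := h'
  refine ⟨Matrix.fromBlocks g 0 0 k, Matrix.fromBlocks g' 0 0 k', ?_, ?_, ?_⟩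
  · simp [fromBlocks_multiply, h1, h3]
  · simp [fromBlocks_multiply, h2, h4]
  · simp [fromBlocks_multiply, fromBlocks_transpose]

theorem exists_GL {A B : Matrix ι ι F} (h : MatCong A B) :
    ∃ g : GL ι F, (g : Matrix ι ι F) * A * (g : Matrix ι ι F)ᵀ = B := by
  obtain ⟨g, g', h1, h2, h3⟩ := h
  exact ⟨⟨g, g', h1, h2⟩, h3⟩

theorem exists_det_eq {A B : Matrix ι ι F} (h : MatCong A B) :
    ∃ c : F, c ≠ 0 ∧ B.det = c ^ 2 * A.det := by
  obtain ⟨g, g', h1, -, rfl⟩ := h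
  refine ⟨g.det, fun h0 => ?_, ?_⟩
  · have := congrArg Matrix.det h1
    simp [h0] at this
  · rw [det_mul, det_mul, det_transpose]; ring

theorem det_ne_zero {A B : Matrix ι ι F} (h : MatCong A B) (hA : A.det ≠ 0) : B.det ≠ 0 := by
  obtain ⟨c, hc, hB⟩ := h.exists_det_eq
  rw [hB]
  exact mul_ne_zero (pow_ne_zero _ hc) hA

theorem transpose_eq_neg {A : Matrix ι ι F} {B : Matrix κ κ F} (h : MatCong A B) (hA : Aᵀ = -A) :
    Bᵀ = -B := by
  obtain ⟨g, g', -, -, rfl⟩ := h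
  simp [transpose_mul, hA, Matrix.mul_assoc]

/-- The index set splits off two given distinct indices. -/
theorem exists_equiv_pair {σ : Type} [DecidableEq σ] {i j : σ} (hij : i ≠ j) :
    ∃ e : Fin 2 ⊕ {k : σ // k ≠ i ∧ k ≠ j} ≃ σ, e (Sum.inl 0) = i ∧ e (Sum.inl 1) = j ∧
      ∀ k, e (Sum.inr k) = k := by
  refine ⟨Equiv.ofBijective (Sum.elim ![i, j] Subtype.val) ⟨?_, ?_⟩, rfl, rfl, fun _ => rfl⟩
  · rintro (a | ⟨a, ha⟩) (b | ⟨b, hb⟩) hab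
    · fin_cases a <;> fin_cases b <;> simp_all
    · fin_cases a
      · exact absurd hab.symm hb.1
      · exact absurd hab.symm hb.2
    · fin_cases b
      · exact absurd hab ha.1
      · exact absurd hab ha.2
    · simp_all
  · intro k
    by_cases hi : k = i
    · exact ⟨Sum.inl 0, by simp [hi]⟩
    by_cases hj : k = j
    · exact ⟨Sum.inl 1, by simp [hj]⟩
    exact ⟨Sum.inr ⟨k, hi, hj⟩, rfl⟩

/-! ### Skew-symmetric matrices -/

/-- An invertible diagonal block of a skew-symmetric matrix splits off as an orthogonal summand; the
complement is the Schur complement. -/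
theorem schur (P : Matrix ι ι F) (Q : Matrix ι κ F) (R : Matrix κ ι F) (S : Matrix κ κ F)
    (hP : P.det ≠ 0) (hPt : Pᵀ = -P) (hR : Rᵀ = -Q) :
    MatCong (Matrix.fromBlocks P Q R S) (Matrix.fromBlocks P 0 0 (S - R * P⁻¹ * Q)) := by
  have hu : IsUnit P.det := isUnit_iff_ne_zero.mpr hP
  refine ⟨Matrix.fromBlocks 1 0 (-(R * P⁻¹)) 1, Matrix.fromBlocks 1 0 (R * P⁻¹) 1, ?_, ?_, ?_⟩
  · simp [fromBlocks_multiply]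
  · simp [fromBlocks_multiply]
  · have h1 : (R * P⁻¹)ᵀ = P⁻¹ * Q := by
      have h2 : (-P)⁻¹ = -P⁻¹ :=
        Matrix.inv_eq_right_inv (by rw [Matrix.neg_mul, Matrix.mul_neg, neg_neg, Matrix.mul_nonsing_inv _ hu])
      rw [transpose_mul, transpose_nonsing_inv, hPt, hR, h2, Matrix.neg_mul, Matrix.mul_neg, neg_neg]
    have h3 : P * (P⁻¹ * Q) = Q := by
      rw [← Matrix.mul_assoc, Matrix.mul_nonsing_inv _ hu, Matrix.one_mul]
    have h4 : R * P⁻¹ * P = R := by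
      rw [Matrix.mul_assoc, Matrix.nonsing_inv_mul _ hu, Matrix.mul_one]
    rw [fromBlocks_transpose, fromBlocks_multiply, fromBlocks_multiply]
    simp only [transpose_one, transpose_zero, transpose_neg, h1]
    congr 1 <;> simp [h3, h4, Matrix.neg_mul, sub_eq_neg_add]

theorem hyperbolic {a : F} (ha : a ≠ 0) :
    MatCong !![0, a; -a, 0] !![(0 : F), 1; -1, 0] := by
  refine ⟨!![a⁻¹, 0; 0, 1], !![a, 0; 0, 1], ?_, ?_, ?_⟩ <;>
  · ext i j
    fin_cases i <;> fin_cases j <;> simp [Matrix.mul_apply, Fin.sum_univ_two, ha]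

/-- A nonempty nondegenerate skew-symmetric matrix splits off a hyperbolic plane. -/
theorem exists_hyperbolic_split (h2 : (2 : F) ≠ 0) [Nonempty ι] (A : Matrix ι ι F) (hA : Aᵀ = -A)
    (hd : A.det ≠ 0) : ∃ (p : ι → Prop) (_ : DecidablePred p) (B : Matrix {k // p k} {k // p k} F),
      Fintype.card {k // p k} + 2 = Fintype.card ι ∧ Bᵀ = -B ∧ B.det ≠ 0 ∧
      MatCong A (Matrix.fromBlocks !![(0 : F), 1; -1, 0] 0 0 B) := by
  have hsk : ∀ i j, A j i = - A i j := fun i j => congrFun (congrFun hA i) j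
  have hz : ∀ i, A i i = 0 := fun i => by
    have := hsk i i
    have h : 2 * A i i = 0 := by linear_combination this
    simpa [h2] using h
  obtain ⟨i⟩ := ‹Nonempty ι›
  obtain ⟨j, hj⟩ : ∃ j, A i j ≠ 0 := by
    by_contra! hcon
    exact hd (Matrix.det_eq_zero_of_row_eq_zero i hcon)
  have hij : i ≠ j := fun h => hj (h ▸ hz i)
  obtain ⟨e, e0, e1, -⟩ := exists_equiv_pair hij
  have hM := reindex A e
  set M := A.submatrix e e with hMdef
  have hMt : Mᵀ = -M := hM.transpose_eq_neg hA
  have hMd : M.det ≠ 0 := by rw [hMdef, det_submatrix_equiv_self]; exact hd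
  have hP : M.toBlocks₁₁ = !![0, A i j; -A i j, 0] := by
    ext a b
    fin_cases a <;> fin_cases b <;> simp [hMdef, toBlocks₁₁, e0, e1, hz, hsk i j]
  have hPd : M.toBlocks₁₁.det ≠ 0 := by rw [hP, det_fin_two]; simpa using hj
  have hs := schur M.toBlocks₁₁ M.toBlocks₁₂ M.toBlocks₂₁ M.toBlocks₂₂ hPd
    (by ext a b; exact congrFun (congrFun hMt (Sum.inl a)) (Sum.inl b))
    (by ext a b; exact congrFun (congrFun hMt (Sum.inl a)) (Sum.inr b))
  rw [fromBlocks_toBlocks] at hs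
  set B := M.toBlocks₂₂ - M.toBlocks₂₁ * M.toBlocks₁₁⁻¹ * M.toBlocks₁₂ with hB
  have hst := hs.transpose_eq_neg hMt
  have hsd := hs.det_ne_zero hMd
  rw [det_fromBlocks_zero₁₂] at hsd
  refine ⟨_, inferInstance, B, ?_, ?_, right_ne_zero_of_mul hsd, ?_⟩
  · have := Fintype.card_congr e
    rw [Fintype.card_sum, Fintype.card_fin] at this
    omega
  · ext a b
    simpa using congrFun (congrFun hst (Sum.inr a)) (Sum.inr b)
  · refine hM.trans (hs.trans (fromBlocks ?_ (refl B)))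
    rw [hP]
    exact hyperbolic hj

/-- Nondegenerate skew-symmetric matrices of the same size are congruent. -/
theorem of_skew (h2 : (2 : F) ≠ 0) (A : Matrix ι ι F) (B : Matrix κ κ F)
    (hA : Aᵀ = -A) (hB : Bᵀ = -B) (hAd : A.det ≠ 0) (hBd : B.det ≠ 0)
    (hc : Fintype.card ι = Fintype.card κ) : MatCong A B := by
  obtain ⟨N, hN⟩ : ∃ N, Fintype.card ι = N := ⟨_, rfl⟩
  induction N using Nat.strong_induction_on generalizing ι κ with
  | _ N ih =>
    rcases Nat.eq_zero_or_pos N with h0 | hpos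
    · have : IsEmpty ι := Fintype.card_eq_zero_iff.mp (hN.trans h0)
      have : IsEmpty κ := Fintype.card_eq_zero_iff.mp (hc ▸ hN.trans h0)
      exact ⟨0, 0, Subsingleton.elim _ _, Subsingleton.elim _ _, Subsingleton.elim _ _⟩
    · have : Nonempty ι := Fintype.card_pos_iff.mp (hN ▸ hpos)
      have : Nonempty κ := Fintype.card_pos_iff.mp (hc ▸ hN ▸ hpos)
      obtain ⟨p, _, A', hcA, hA't, hA'd, hAA⟩ := exists_hyperbolic_split h2 A hA hAd
      obtain ⟨r, _, B', hcB, hB't, hB'd, hBB⟩ := exists_hyperbolic_split h2 B hB hBd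
      refine hAA.trans ((fromBlocks (refl _) ?_).trans hBB.symm)
      exact ih (Fintype.card {k // p k}) (by omega) A' B' hA't hB't hA'd hB'd (by omega) rfl

/-! ### Symmetric matrices -/

theorem exists_diagonal (h2 : (2 : F) ≠ 0) {n : ℕ} (A : Matrix (Fin n) (Fin n) F) (hA : Aᵀ = A) :
    ∃ d : Fin n → F, MatCong A (diagonal d) := by
  let : Invertible (2 : F) := invertibleOfNonzero h2
  have hs : (Matrix.toBilin' A).IsSymm := Matrix.isSymm_toBilin'_iff_isSymm.mpr hA
  obtain ⟨v, hv⟩ := LinearMap.BilinForm.exists_orthogonal_basis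
    (LinearMap.BilinForm.isSymm_iff.mp hs)
  have hn : Module.finrank F (Fin n → F) = n := by simp
  set b := v.reindex (finCongr hn) with hb
  have hbo : ∀ i j, i ≠ j → Matrix.toBilin' A (b i) (b j) = 0 := by
    intro i j hij
    simp only [hb, Module.Basis.reindex_apply]
    exact hv (fun h => hij ((finCongr hn).symm.injective h))
  refine ⟨fun i => Matrix.toBilin' A (b i) (b i), ((Pi.basisFun F (Fin n)).toMatrix b)ᵀ,
    (b.toMatrix (Pi.basisFun F (Fin n)))ᵀ, ?_, ?_, ?_⟩
  · rw [← transpose_mul, Module.Basis.toMatrix_mul_toMatrix_flip, transpose_one]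
  · rw [← transpose_mul, Module.Basis.toMatrix_mul_toMatrix_flip, transpose_one]
  · have key : ∀ i j, (((Pi.basisFun F (Fin n)).toMatrix b)ᵀ * A *
        ((Pi.basisFun F (Fin n)).toMatrix b)ᵀᵀ) i j = Matrix.toBilin' A (b i) (b j) := by
      intro i j
      simp only [Matrix.toBilin'_apply, Matrix.mul_apply, Module.Basis.toMatrix_apply,
        transpose_apply, Pi.basisFun_repr, Finset.sum_mul]
      exact Finset.sum_comm
    ext i j
    rw [key]
    by_cases hij : i = j
    · subst hij; simp
    · rw [diagonal_apply_ne _ hij, hbo i j hij]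

theorem exists_unit_rep [Fintype F] (hodd : Odd (Fintype.card F)) {a b : F} (ha : a ≠ 0)
    (hb : b ≠ 0) : ∃ x y : F, a * x ^ 2 + b * y ^ 2 = 1 := by
  open Polynomial in
  obtain ⟨x, y, h⟩ := FiniteField.exists_root_sum_quadratic
    (f := C a * X ^ 2 + C 0 * X + C (-1)) (g := C b * X ^ 2 + C 0 * X + C 0)
    (degree_quadratic ha) (degree_quadratic hb) (Nat.odd_iff.mp hodd)
  refine ⟨x, y, ?_⟩
  simp at h
  linear_combination h

theorem diag_pair [Fintype F] (hodd : Odd (Fintype.card F)) {a b : F} (ha : a ≠ 0) (hb : b ≠ 0) :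
    MatCong (diagonal ![a, b]) (diagonal ![1, a * b]) := by
  obtain ⟨x, y, h⟩ := exists_unit_rep hodd ha hb
  -- The first row is a vector of norm `1`, the second one spans its orthogonal complement.
  refine ⟨!![x, y; -(b * y), a * x], !![a * x, -y; b * y, x], ?_, ?_, ?_⟩ <;>
  · ext i j
    fin_cases i <;> fin_cases j <;> simp [Matrix.mul_apply, Fin.sum_univ_two, vecMul_diagonal] <;>
      grind

/-- Two diagonal entries can be replaced by `1` and their product. -/
theorem diagonal_merge [Fintype F] (hodd : Odd (Fintype.card F)) (d : ι → F) {i j : ι}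
    (hij : i ≠ j) (hi : d i ≠ 0) (hj : d j ≠ 0) :
    MatCong (diagonal d)
      (diagonal (Function.update (Function.update d i 1) j (d i * d j))) := by
  obtain ⟨e, e0, e1, er⟩ := exists_equiv_pair hij
  have aux : ∀ c : ι → F, (∀ k, k ≠ i → k ≠ j → c k = d k) → (diagonal c).submatrix e e =
      Matrix.fromBlocks (diagonal ![c i, c j]) 0 0 (diagonal fun k => d (e (Sum.inr k))) := by
    intro c hc
    rw [submatrix_diagonal_equiv, fromBlocks_diagonal]
    congr 1
    ext (k | k)
    · fin_cases k <;> simp [e0, e1]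
    · simpa [er] using hc k k.2.1 k.2.2
  have h1 := reindex (diagonal d) e
  have h3 := reindex (diagonal (Function.update (Function.update d i 1) j (d i * d j))) e
  rw [aux _ fun _ _ _ => rfl] at h1
  rw [aux _ fun k h h' => by simp [h, h']] at h3
  refine h1.trans ((fromBlocks ?_ (refl _)).trans h3.symm)
  simpa [hij] using diag_pair hodd hi hj

/-- A nondegenerate diagonal matrix is congruent to `diag(1, …, 1, ∏ d, 1, …, 1)`. -/
theorem diagonal_collect [Fintype F] (hodd : Odd (Fintype.card F)) (d : ι → F)
    (hd : ∀ k, d k ≠ 0) (i₀ : ι) :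
    MatCong (diagonal d) (diagonal (Function.update 1 i₀ (∏ k, d k))) := by
  have key : ∀ s : Finset ι, i₀ ∉ s → MatCong (diagonal d)
      (diagonal fun k => if k ∈ s then 1 else if k = i₀ then d i₀ * ∏ k ∈ s, d k else d k) := by
    intro s
    induction s using Finset.induction_on with
    | empty =>
      intro _
      convert refl (diagonal d) using 2
      ext k
      by_cases hk : k = i₀ <;> simp [hk]
    | insert a s has ih =>
      intro hi
      have hia : a ≠ i₀ := fun h => hi (by simp [h])
      have his : i₀ ∉ s := fun h => hi (by simp [h])
      refine (ih his).trans ?_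
      convert diagonal_merge hodd _ hia ?_ ?_ using 2
      · ext k
        by_cases hk : k = i₀
        · subst hk
          simp [his, has, hia, hia.symm, Finset.prod_insert has]
          ring
        · by_cases hka : k = a
          · subst hka; simp [hk]
          · simp [hk, hka]
      · simp [has, hia, hd a]
      · simp [his, hd i₀, Finset.prod_ne_zero_iff, hd]
  convert key (Finset.univ.erase i₀) (by simp) using 2
  ext k
  by_cases hk : k = i₀
  · subst hk; simp [Finset.mul_prod_erase]
  · simp [hk]

/-- Nondegenerate symmetric matrices of the same size over a finite field of odd order are congruent
as soon as their determinants agree up to a square. -/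
theorem of_symm [Fintype F] (hodd : Odd (Fintype.card F)) (h2 : (2 : F) ≠ 0) {n : ℕ} (i₀ : Fin n)
    (A B : Matrix (Fin n) (Fin n) F) (hA : Aᵀ = A) (hB : Bᵀ = B) (hAd : A.det ≠ 0)
    (hBd : B.det ≠ 0) (hsq : ∃ β : F, A.det = β ^ 2 * B.det) : MatCong A B := by
  have norm_form : ∀ M : Matrix (Fin n) (Fin n) F, Mᵀ = M → M.det ≠ 0 →
      ∃ p c : F, c ≠ 0 ∧ p = c ^ 2 * M.det ∧ MatCong M (diagonal (Function.update 1 i₀ p)) := by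
    intro M hM hMd
    obtain ⟨d, hd⟩ := exists_diagonal h2 M hM
    obtain ⟨c, hc, hdet⟩ := hd.exists_det_eq
    have hd0 := hd.det_ne_zero hMd
    rw [det_diagonal] at hdet hd0
    exact ⟨_, c, hc, hdet, hd.trans (diagonal_collect hodd d
      (fun k => Finset.prod_ne_zero_iff.mp hd0 k (Finset.mem_univ k)) i₀)⟩
  obtain ⟨p, c, hc, hp, hAp⟩ := norm_form A hA hAd
  obtain ⟨r, c', hc', hr, hBr⟩ := norm_form B hB hBd
  obtain ⟨β, hβ⟩ := hsq
  have hβ0 : β ≠ 0 := fun h => hAd (by simp [hβ, h])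
  refine hAp.trans (MatCong.trans ?_ hBr.symm)
  set t : F := c' / (c * β) with ht
  have ht0 : t ≠ 0 := div_ne_zero hc' (mul_ne_zero hc hβ0)
  have hpr : t * p * t = r := by
    rw [ht, hp, hr, hβ]; field_simp
  refine ⟨diagonal (Function.update 1 i₀ t), diagonal (Function.update 1 i₀ t⁻¹), ?_, ?_, ?_⟩
  all_goals
    simp only [diagonal_transpose, diagonal_mul_diagonal, ← diagonal_one]
    congr 1
    ext k
    by_cases hk : k = i₀
    · subst hk; simp [ht0, hpr]
    · simp [hk]

end MatCong

/-! ### The three orbits -/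

/-- Let `q` be an odd prime power and `n ≥ 2` even. The action of
`PGL_n(F_q)` on the set of scalar-equivalence classes of nondegenerate symmetric and
skew-symmetric matrices, `ḡ·h̄ = (g·h·gᵗ)‾`, has exactly three orbits: (i) the classes of
skew-symmetric `h`, (ii) the classes of symmetric `h` with `det h` a square, and (iii) the
classes of symmetric `h` with `det h` a non-square.

Two classes `h̄, h̄'` lie in the same orbit iff `g·h·gᵗ = α·h'` for some `g ∈ GL_n(F_q)`,
`α ∈ F_q^×`; the theorem states that this relation holds precisely when `h, h'` are both
skew-symmetric, or both symmetric with `det(h)·det(h')⁻¹` a square (this says each of the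
three sets is a single orbit and that they are pairwise distinct), together with the
nonemptiness of each of the three sets. -/
theorem three_orbits_on_forms
    (F : Type) [Field F] [Fintype F] (hodd : Odd (Fintype.card F))
    (n : ℕ) (hn2 : 2 ≤ n) (hneven : Even n) :
    (∀ h h' : GL (Fin n) F,
      ((↑h : Matrix (Fin n) (Fin n) F)ᵀ = (↑h : Matrix (Fin n) (Fin n) F) ∨
        (↑h : Matrix (Fin n) (Fin n) F)ᵀ = -(↑h : Matrix (Fin n) (Fin n) F)) →
      ((↑h' : Matrix (Fin n) (Fin n) F)ᵀ = (↑h' : Matrix (Fin n) (Fin n) F) ∨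
        (↑h' : Matrix (Fin n) (Fin n) F)ᵀ = -(↑h' : Matrix (Fin n) (Fin n) F)) →
      ((∃ (g : GL (Fin n) F) (α : Fˣ),
          (↑g : Matrix (Fin n) (Fin n) F) * (↑h : Matrix (Fin n) (Fin n) F) *
            (↑g : Matrix (Fin n) (Fin n) F)ᵀ = (α : F) • (↑h' : Matrix (Fin n) (Fin n) F)) ↔
        (((↑h : Matrix (Fin n) (Fin n) F)ᵀ = -(↑h : Matrix (Fin n) (Fin n) F) ∧
          (↑h' : Matrix (Fin n) (Fin n) F)ᵀ = -(↑h' : Matrix (Fin n) (Fin n) F)) ∨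
         ((↑h : Matrix (Fin n) (Fin n) F)ᵀ = (↑h : Matrix (Fin n) (Fin n) F) ∧
          (↑h' : Matrix (Fin n) (Fin n) F)ᵀ = (↑h' : Matrix (Fin n) (Fin n) F) ∧
          ∃ β : Fˣ, (β : F) ^ 2 =
            (↑h : Matrix (Fin n) (Fin n) F).det *
              ((↑h' : Matrix (Fin n) (Fin n) F).det)⁻¹)))) ∧
    (∃ h : GL (Fin n) F,
      (↑h : Matrix (Fin n) (Fin n) F)ᵀ = -(↑h : Matrix (Fin n) (Fin n) F)) ∧
    (∃ h : GL (Fin n) F,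
      (↑h : Matrix (Fin n) (Fin n) F)ᵀ = (↑h : Matrix (Fin n) (Fin n) F) ∧
      ∃ β : Fˣ, (β : F) ^ 2 = (↑h : Matrix (Fin n) (Fin n) F).det) ∧
    (∃ h : GL (Fin n) F,
      (↑h : Matrix (Fin n) (Fin n) F)ᵀ = (↑h : Matrix (Fin n) (Fin n) F) ∧
      ¬ ∃ β : Fˣ, (β : F) ^ 2 = (↑h : Matrix (Fin n) (Fin n) F).det) := by
  have hchar : ringChar F ≠ 2 := fun h => by
    have := FiniteField.even_card_of_char_two h
    have := Nat.odd_iff.mp hodd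
    omega
  have h2 : (2 : F) ≠ 0 := Ring.two_ne_zero hchar
  let i₀ : Fin n := ⟨0, by omega⟩
  have hdet : ∀ h : GL (Fin n) F, (h : Matrix (Fin n) (Fin n) F).det ≠ 0 := fun h =>
    ((Matrix.isUnit_iff_isUnit_det _).mp h.isUnit).ne_zero
  refine ⟨fun h h' hh hh' => ⟨?_, ?_⟩, ?_, ?_, ?_⟩
  · rintro ⟨g, α, hg⟩
    have hgg := congrArg Matrix.transpose hg
    simp only [transpose_mul, transpose_transpose, transpose_smul] at hgg
    have hα : (α : F) ≠ 0 := α.ne_zero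
    rcases hh with hs | hs
    · right
      rw [hs, ← Matrix.mul_assoc, hg] at hgg
      refine ⟨hs, (smul_right_injective _ hα hgg).symm, ?_⟩
      obtain ⟨m, hm⟩ := hneven
      have hpow : (α : F) ^ n = (α : F) ^ m * (α : F) ^ m := by rw [← pow_add, ← hm]
      have hd := congrArg Matrix.det hg
      rw [det_mul, det_mul, det_transpose, det_smul, Fintype.card_fin, hpow] at hd
      refine ⟨Units.mk0 ((α : F) ^ m / (g : Matrix (Fin n) (Fin n) F).det)
        (div_ne_zero (pow_ne_zero _ hα) (hdet g)), ?_⟩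
      have hg0 := hdet g
      have hh0 := hdet h'
      rw [Units.val_mk0]
      field_simp
      linear_combination -hd
    · left
      rw [hs, Matrix.neg_mul, Matrix.mul_neg, ← Matrix.mul_assoc, hg, ← smul_neg] at hgg
      exact ⟨hs, (smul_right_injective _ hα hgg).symm⟩
  · rintro (⟨hs, hs'⟩ | ⟨hs, hs', β, hβ⟩)
    · obtain ⟨g, hg⟩ := (MatCong.of_skew h2 _ _ hs hs' (hdet h) (hdet h') rfl).exists_GL
      exact ⟨g, 1, by simpa using hg⟩
    · obtain ⟨g, hg⟩ := (MatCong.of_symm hodd h2 i₀ _ _ hs hs' (hdet h) (hdet h')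
        ⟨β, by rw [hβ, inv_mul_cancel_right₀ (hdet h')]⟩).exists_GL
      exact ⟨g, 1, by simpa using hg⟩
  · obtain ⟨m, hm⟩ := hneven
    let e : Fin n ≃ Fin m ⊕ Fin m := (finCongr hm).trans finSumFinEquiv.symm
    refine ⟨GeneralLinearGroup.mkOfDetNeZero ((J (Fin m) F).submatrix e e) ?_, ?_⟩
    · rw [det_submatrix_equiv_self]
      exact (isUnit_det_J (Fin m) F).ne_zero
    · change ((J (Fin m) F).submatrix e e)ᵀ = -(J (Fin m) F).submatrix e e
      rw [transpose_submatrix, J_transpose]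
      rfl
  · exact ⟨1, by simp, 1, by simp⟩
  · obtain ⟨c, hc⟩ := FiniteField.exists_nonsquare hchar
    have hc0 : c ≠ 0 := fun h => hc (h ▸ IsSquare.zero)
    have hd : (diagonal (Function.update (1 : Fin n → F) i₀ c)).det = c := by
      simp [det_diagonal, Finset.prod_update_of_mem]
    refine ⟨GeneralLinearGroup.mkOfDetNeZero (diagonal (Function.update 1 i₀ c))
      (by rw [hd]; exact hc0), diagonal_transpose _, ?_⟩
    rintro ⟨β, hβ⟩
    apply hc
    refine ⟨β, ?_⟩
    rw [← pow_two, hβ]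
    exact hd.symm
end

section
/- Let q be an odd prime power, n an odd positive integer, and h ∈ GL_n(F_q) symmetric (hᵗ = h). Let π : GL_n(F_q) → PGL_n(F_q) be the canonical projection, O(h) = {g ∈ GL_n(F_q) : g·h·gᵗ = h}, SO(h) = {g ∈ O(h) : det g = 1}, and S(h) = {ḡ ∈ PGL_n(F_q) : g·h·gᵗ = α·h for some α ∈ F_q^×}. Then for every complex class function χ on PGL_n(F_q): ⟨χ, Ind_{S(h)}^{PGL_n(F_q)}(1)⟩ = ⟨χ∘π, Ind_{SO(h)}^{GL_n(F_q)}(1)⟩ = ⟨χ∘π, Ind_{O(h)}^{GL_n(F_q)}(1)⟩. -/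
/-!
By Frobenius reciprocity (`innerProd_ind_one`), each inner product is the average of a class
function over the subgroup induced from. The average of `χ ∘ π` over a subgroup `H` of `GL_n` equals
the average of `χ` over `π(H)` (`subgroupAvg_comp`). So everything reduces to the equalities
`π(SO(h)) = π(O(h)) = S(h)`. The inclusions `SO(h) ≤ O(h) ≤ Sim(h)` are clear, and conversely every
similitude can, in odd dimension, be rescaled into `SO(h)` (`map_Sim_le_map_SO`).
-/

open Matrix
/-- The subgroup of nonzero scalar matrices in `GL (Fin n) F`, i.e. `Z ≅ F^×`. -/
def scalarSub (n : ℕ) (F : Type) [Field F] : Subgroup (GL (Fin n) F) :=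
  (Units.map (Matrix.scalar (Fin n)).toMonoidHom).range

instance scalarSub_normal (n : ℕ) (F : Type) [Field F] : (scalarSub n F).Normal := by
  constructor
  rintro x ⟨c, rfl⟩ g
  refine ⟨c, Units.ext ?_⟩
  have hc : (Matrix.scalar (Fin n) (c : F)) * (↑g : Matrix (Fin n) (Fin n) F)
      = (↑g : Matrix (Fin n) (Fin n) F) * Matrix.scalar (Fin n) (c : F) :=
    Matrix.scalar_commute (c : F) (fun r => mul_comm _ r) _
  simp only [Units.coe_map, RingHom.toMonoidHom_eq_coe, MonoidHom.coe_coe, Units.val_mul]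
  rw [← hc, mul_assoc, ← Units.val_mul, mul_inv_cancel, Units.val_one, mul_one]

/-- The projective general linear group `PGL_n(F) = GL_n(F)/Z`. -/
abbrev PGL (n : ℕ) (F : Type) [Field F] : Type :=
  GL (Fin n) F ⧸ scalarSub n F

/-- The canonical projection `GL_n(F) → PGL_n(F)`. -/
def pgl (n : ℕ) (F : Type) [Field F] : GL (Fin n) F →* PGL n F :=
  QuotientGroup.mk' (scalarSub n F)

lemma GL_inv_mul_coe {n : ℕ} {F : Type} [Field F] (a : GL (Fin n) F) :
    ((a⁻¹ : GL (Fin n) F) : Matrix (Fin n) (Fin n) F) *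
      ((a : GL (Fin n) F) : Matrix (Fin n) (Fin n) F) = 1 := by
  have := congrArg (Units.val) (inv_mul_cancel a)
  rwa [Units.val_mul, Units.val_one] at this

lemma GL_transpose_mul_transpose {n : ℕ} {F : Type} [Field F] (a : GL (Fin n) F) :
    ((a : GL (Fin n) F) : Matrix (Fin n) (Fin n) F)ᵀ *
      ((a⁻¹ : GL (Fin n) F) : Matrix (Fin n) (Fin n) F)ᵀ = 1 := by
  rw [← transpose_mul, GL_inv_mul_coe, transpose_one]

/-- The similitude group of the bilinear form `h`:
`{g ∈ GL_n(F) : g·h·gᵗ = α·h for some α ∈ F^×}`. -/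
def Sim {n : ℕ} {F : Type} [Field F] (h : Matrix (Fin n) (Fin n) F) :
    Subgroup (GL (Fin n) F) where
  carrier := {g | ∃ α : Fˣ,
    (↑g : Matrix (Fin n) (Fin n) F) * h * (↑g : Matrix (Fin n) (Fin n) F)ᵀ = (α : F) • h}
  one_mem' := ⟨1, by simp⟩
  mul_mem' := by
    rintro a b ⟨α, ha⟩ ⟨β, hb⟩
    refine ⟨β * α, ?_⟩
    show (↑(a * b) : Matrix (Fin n) (Fin n) F) * h * (↑(a * b) : Matrix (Fin n) (Fin n) F)ᵀ = _
    rw [Units.val_mul, transpose_mul]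
    calc (↑a : Matrix (Fin n) (Fin n) F) * ↑b * h *
          ((↑b : Matrix (Fin n) (Fin n) F)ᵀ * (↑a : Matrix (Fin n) (Fin n) F)ᵀ)
        = ↑a * ((↑b : Matrix (Fin n) (Fin n) F) * h * (↑b : Matrix (Fin n) (Fin n) F)ᵀ) *
          (↑a : Matrix (Fin n) (Fin n) F)ᵀ := by
          simp only [mul_assoc]
      _ = (β : F) • ((↑a : Matrix (Fin n) (Fin n) F) * h * (↑a : Matrix (Fin n) (Fin n) F)ᵀ) := by
          rw [hb, mul_smul_comm, smul_mul_assoc]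
      _ = (β : F) • ((α : F) • h) := by rw [ha]
      _ = ((β * α : Fˣ) : F) • h := by rw [smul_smul, Units.val_mul]
  inv_mem' := by
    rintro a ⟨α, ha⟩
    refine ⟨α⁻¹, ?_⟩
    show (↑(a⁻¹) : Matrix (Fin n) (Fin n) F) * h * (↑(a⁻¹) : Matrix (Fin n) (Fin n) F)ᵀ = _
    have key : (α : F) • ((↑(a⁻¹) : Matrix (Fin n) (Fin n) F) * h *
        (↑(a⁻¹) : Matrix (Fin n) (Fin n) F)ᵀ) = h := by
      calc (α : F) • ((↑(a⁻¹) : Matrix (Fin n) (Fin n) F) * h *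
            (↑(a⁻¹) : Matrix (Fin n) (Fin n) F)ᵀ)
          = (↑(a⁻¹) : Matrix (Fin n) (Fin n) F) * ((α : F) • h) *
            (↑(a⁻¹) : Matrix (Fin n) (Fin n) F)ᵀ := by
            rw [mul_smul_comm, smul_mul_assoc]
        _ = (↑(a⁻¹) : Matrix (Fin n) (Fin n) F) *
            ((↑a : Matrix (Fin n) (Fin n) F) * h * (↑a : Matrix (Fin n) (Fin n) F)ᵀ) *
            (↑(a⁻¹) : Matrix (Fin n) (Fin n) F)ᵀ := by rw [ha]
        _ = ((↑(a⁻¹) : Matrix (Fin n) (Fin n) F) * ↑a) * h *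
            ((↑a : Matrix (Fin n) (Fin n) F)ᵀ * (↑(a⁻¹) : Matrix (Fin n) (Fin n) F)ᵀ) := by
            simp only [mul_assoc]
        _ = h := by rw [GL_inv_mul_coe, GL_transpose_mul_transpose, one_mul, mul_one]
    calc (↑(a⁻¹) : Matrix (Fin n) (Fin n) F) * h * (↑(a⁻¹) : Matrix (Fin n) (Fin n) F)ᵀ
        = ((α : F))⁻¹ • ((α : F) • ((↑(a⁻¹) : Matrix (Fin n) (Fin n) F) * h *
          (↑(a⁻¹) : Matrix (Fin n) (Fin n) F)ᵀ)) := by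
          rw [smul_smul, inv_mul_cancel₀ (Units.ne_zero α), one_smul]
      _ = ((α⁻¹ : Fˣ) : F) • h := by rw [key, Units.val_inv_eq_inv_val]

/-- The subgroup of similitudes whose factor is a square:
`{g ∈ GL_n(F) : g·h·gᵗ = β²·h for some β ∈ F^×}`. -/
def Sim0 {n : ℕ} {F : Type} [Field F] (h : Matrix (Fin n) (Fin n) F) :
    Subgroup (GL (Fin n) F) where
  carrier := {g | ∃ β : Fˣ,
    (↑g : Matrix (Fin n) (Fin n) F) * h * (↑g : Matrix (Fin n) (Fin n) F)ᵀ = ((β : F))^2 • h}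
  one_mem' := ⟨1, by simp⟩
  mul_mem' := by
    rintro a b ⟨α, ha⟩ ⟨β, hb⟩
    refine ⟨β * α, ?_⟩
    show (↑(a * b) : Matrix (Fin n) (Fin n) F) * h * (↑(a * b) : Matrix (Fin n) (Fin n) F)ᵀ = _
    rw [Units.val_mul, transpose_mul]
    calc (↑a : Matrix (Fin n) (Fin n) F) * ↑b * h *
          ((↑b : Matrix (Fin n) (Fin n) F)ᵀ * (↑a : Matrix (Fin n) (Fin n) F)ᵀ)
        = ↑a * ((↑b : Matrix (Fin n) (Fin n) F) * h * (↑b : Matrix (Fin n) (Fin n) F)ᵀ) *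
          (↑a : Matrix (Fin n) (Fin n) F)ᵀ := by
          simp only [mul_assoc]
      _ = ((β : F))^2 • ((↑a : Matrix (Fin n) (Fin n) F) * h *
          (↑a : Matrix (Fin n) (Fin n) F)ᵀ) := by
          rw [hb, mul_smul_comm, smul_mul_assoc]
      _ = ((β : F))^2 • (((α : F))^2 • h) := by rw [ha]
      _ = ((↑(β * α) : F))^2 • h := by rw [smul_smul, Units.val_mul, mul_pow]
  inv_mem' := by
    rintro a ⟨α, ha⟩
    refine ⟨α⁻¹, ?_⟩
    show (↑(a⁻¹) : Matrix (Fin n) (Fin n) F) * h * (↑(a⁻¹) : Matrix (Fin n) (Fin n) F)ᵀ = _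
    have key : ((α : F))^2 • ((↑(a⁻¹) : Matrix (Fin n) (Fin n) F) * h *
        (↑(a⁻¹) : Matrix (Fin n) (Fin n) F)ᵀ) = h := by
      calc ((α : F))^2 • ((↑(a⁻¹) : Matrix (Fin n) (Fin n) F) * h *
            (↑(a⁻¹) : Matrix (Fin n) (Fin n) F)ᵀ)
          = (↑(a⁻¹) : Matrix (Fin n) (Fin n) F) * (((α : F))^2 • h) *
            (↑(a⁻¹) : Matrix (Fin n) (Fin n) F)ᵀ := by
            rw [mul_smul_comm, smul_mul_assoc]
        _ = (↑(a⁻¹) : Matrix (Fin n) (Fin n) F) *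
            ((↑a : Matrix (Fin n) (Fin n) F) * h * (↑a : Matrix (Fin n) (Fin n) F)ᵀ) *
            (↑(a⁻¹) : Matrix (Fin n) (Fin n) F)ᵀ := by rw [ha]
        _ = ((↑(a⁻¹) : Matrix (Fin n) (Fin n) F) * ↑a) * h *
            ((↑a : Matrix (Fin n) (Fin n) F)ᵀ * (↑(a⁻¹) : Matrix (Fin n) (Fin n) F)ᵀ) := by
            simp only [mul_assoc]
        _ = h := by rw [GL_inv_mul_coe, GL_transpose_mul_transpose, one_mul, mul_one]
    calc (↑(a⁻¹) : Matrix (Fin n) (Fin n) F) * h * (↑(a⁻¹) : Matrix (Fin n) (Fin n) F)ᵀ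
        = (((α : F))^2)⁻¹ • (((α : F))^2 • ((↑(a⁻¹) : Matrix (Fin n) (Fin n) F) * h *
          (↑(a⁻¹) : Matrix (Fin n) (Fin n) F)ᵀ)) := by
          rw [smul_smul, inv_mul_cancel₀ (pow_ne_zero 2 (Units.ne_zero α)), one_smul]
      _ = ((↑(α⁻¹) : F))^2 • h := by
          rw [key, Units.val_inv_eq_inv_val, inv_pow]

/-- The isometry group of the bilinear form `h`: `{g ∈ GL_n(F) : g·h·gᵗ = h}`. -/
def Isom {n : ℕ} {F : Type} [Field F] (h : Matrix (Fin n) (Fin n) F) :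
    Subgroup (GL (Fin n) F) where
  carrier := {g | (↑g : Matrix (Fin n) (Fin n) F) * h * (↑g : Matrix (Fin n) (Fin n) F)ᵀ = h}
  one_mem' := by simp
  mul_mem' := by
    intro a b ha hb
    show (↑(a * b) : Matrix (Fin n) (Fin n) F) * h * (↑(a * b) : Matrix (Fin n) (Fin n) F)ᵀ = h
    rw [Units.val_mul, transpose_mul]
    calc (↑a : Matrix (Fin n) (Fin n) F) * ↑b * h *
          ((↑b : Matrix (Fin n) (Fin n) F)ᵀ * (↑a : Matrix (Fin n) (Fin n) F)ᵀ)
        = ↑a * ((↑b : Matrix (Fin n) (Fin n) F) * h * (↑b : Matrix (Fin n) (Fin n) F)ᵀ) *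
          (↑a : Matrix (Fin n) (Fin n) F)ᵀ := by simp only [mul_assoc]
      _ = h := by rw [hb, ha]
  inv_mem' := by
    intro a ha
    show (↑(a⁻¹) : Matrix (Fin n) (Fin n) F) * h * (↑(a⁻¹) : Matrix (Fin n) (Fin n) F)ᵀ = h
    replace ha : (↑a : Matrix (Fin n) (Fin n) F) * h * (↑a : Matrix (Fin n) (Fin n) F)ᵀ = h := ha
    conv_lhs => rw [← ha]
    calc (↑(a⁻¹) : Matrix (Fin n) (Fin n) F) *
          ((↑a : Matrix (Fin n) (Fin n) F) * h * (↑a : Matrix (Fin n) (Fin n) F)ᵀ) *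
          (↑(a⁻¹) : Matrix (Fin n) (Fin n) F)ᵀ
        = ((↑(a⁻¹) : Matrix (Fin n) (Fin n) F) * ↑a) * h *
          ((↑a : Matrix (Fin n) (Fin n) F)ᵀ * (↑(a⁻¹) : Matrix (Fin n) (Fin n) F)ᵀ) := by
          simp only [mul_assoc]
      _ = h := by rw [GL_inv_mul_coe, GL_transpose_mul_transpose, one_mul, mul_one]

open scoped Classical in
/-- The induced class function `(Ind_H^G φ)(x) = (1/|H|) ∑_{y ∈ G, y⁻¹xy ∈ H} φ(y⁻¹xy)`. -/
noncomputable def ind {G : Type*} [Group G] [Fintype G] (H : Subgroup G) (φ : G → ℂ) :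
    G → ℂ :=
  fun x => (Nat.card H : ℂ)⁻¹ * ∑ y : G, if y⁻¹ * x * y ∈ H then φ (y⁻¹ * x * y) else 0

/-- The inner product `⟨φ,ψ⟩ = (1/|G|) ∑_{x ∈ G} φ(x) conj(ψ(x))` of complex functions. -/
noncomputable def innerProd {G : Type*} [Group G] [Fintype G] (φ ψ : G → ℂ) : ℂ :=
  (Nat.card G : ℂ)⁻¹ * ∑ x : G, φ x * (starRingEnd ℂ) (ψ x)

noncomputable instance (n : ℕ) (F : Type) [Field F] [Fintype F] :
    Fintype (GL (Fin n) F) := Fintype.ofFinite _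

noncomputable instance (n : ℕ) (F : Type) [Field F] [Fintype F] :
    Fintype (PGL n F) := Fintype.ofFinite _

open scoped Classical in
/-- The average of a function over a subgroup. -/
noncomputable def subgroupAvg {G : Type*} [Group G] [Fintype G] (H : Subgroup G) (f : G → ℂ) : ℂ :=
  (Nat.card H : ℂ)⁻¹ * ∑ x : H, f x

/-- Frobenius reciprocity for the trivial character: pairing a class function with
`Ind_H^G(1)` averages it over `H`. -/
lemma innerProd_ind_one {G : Type*} [Group G] [Fintype G] (H : Subgroup G) (f : G → ℂ)
    (hf : ∀ x y : G, f (y * x * y⁻¹) = f x) :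
    innerProd f (ind H (fun _ => 1)) = subgroupAvg H f := by
  classical
  have hG : (Nat.card G : ℂ) ≠ 0 := by exact_mod_cast Nat.card_pos.ne'
  have inner_sum (y : G) :
      ∑ x : G, f x * (if y⁻¹ * x * y ∈ H then 1 else 0) = ∑ x : H, f x := by
    rw [← (MulAut.conj y).toEquiv.sum_comp]
    have : ∀ x : G, f ((MulAut.conj y).toEquiv x) *
        (if y⁻¹ * ((MulAut.conj y).toEquiv x) * y ∈ H then (1 : ℂ) else 0) =
        if x ∈ H then f x else 0 := by
      intro x
      have e : y⁻¹ * (y * x * y⁻¹) * y = x := by group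
      simp [hf, e]
    rw [Finset.sum_congr rfl fun x _ => this x, ← Finset.sum_filter]
    exact (Finset.sum_subtype _ (by simp) f)
  have expand : ∑ x : G, f x * (starRingEnd ℂ) (ind H (fun _ => 1) x) =
      (Nat.card H : ℂ)⁻¹ * ∑ y : G, ∑ x : G, f x * (if y⁻¹ * x * y ∈ H then 1 else 0) := by
    rw [Finset.sum_comm, Finset.mul_sum]
    refine Finset.sum_congr rfl fun x _ => ?_
    simp only [ind, map_mul, map_inv₀, Complex.conj_natCast, map_sum, apply_ite (starRingEnd ℂ),
      map_one, map_zero]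
    rw [← Finset.mul_sum]
    ring
  rw [innerProd, expand, Finset.sum_congr rfl fun y _ => inner_sum y, subgroupAvg,
    Finset.sum_const, Finset.card_univ, ← Nat.card_eq_fintype_card, nsmul_eq_mul]
  field_simp

/-- Averages are unchanged by pushing a subgroup forward along a homomorphism, since all the
fibres of `H → π(H)` have the same cardinality. -/
lemma subgroupAvg_comp {G K : Type*} [Group G] [Fintype G] [Group K] [Fintype K] (π : G →* K)
    (H : Subgroup G) (f : K → ℂ) :
    subgroupAvg H (f ∘ π) = subgroupAvg (H.map π) f := by
  classical
  let φ : H →* H.map π := π.subgroupMap H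
  have hφ : Function.Surjective φ := π.subgroupMap_surjective H
  obtain ⟨m, hm⟩ : ∃ m : ℕ, ∀ y : H.map π, (Finset.univ.filter fun x : H => φ x = y).card = m :=
    ⟨_, fun y => MonoidHom.card_fiber_eq_of_mem_range φ (hφ y) (hφ 1)⟩
  have hsum (u : H.map π → ℂ) : ∑ x : H, u (φ x) = m * ∑ y, u y := by
    rw [← Finset.sum_fiberwise Finset.univ φ, Finset.mul_sum]
    refine Finset.sum_congr rfl fun y _ => ?_
    rw [Finset.sum_congr rfl (g := fun _ => u y) (by simp +contextual), Finset.sum_const, hm,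
      nsmul_eq_mul]
  have hcard : (Nat.card H : ℂ) = m * Nat.card (H.map π) := by
    simpa [Nat.card_eq_fintype_card] using hsum fun _ => 1
  have hm0 : (m : ℂ) ≠ 0 := by
    rintro h0
    rw [h0, zero_mul] at hcard
    exact Nat.card_pos.ne' (Nat.cast_eq_zero.mp hcard)
  have hf : ∑ x : H, (f ∘ π) x = m * ∑ y : H.map π, f y := hsum fun y => f y
  rw [subgroupAvg, subgroupAvg, hf, hcard, mul_inv]
  field_simp

/-- In odd dimension every similitude `g` is a scalar multiple of an element of `SO(h)`. If `α` is
the multiplier of `g` and `n = 2k + 1`, then `(det g)² = αⁿ`, and `c = αᵏ / det g` satisfies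
`c² α = 1` and `cⁿ det g = 1`, so `c g` lies in `SO(h)`. -/
lemma map_Sim_le_map_SO {F : Type} [Field F] {n : ℕ} (hnodd : Odd n) (h : GL (Fin n) F) :
    (Sim (h : Matrix (Fin n) (Fin n) F)).map (pgl n F) ≤
      (Isom (h : Matrix (Fin n) (Fin n) F) ⊓ (Matrix.GeneralLinearGroup.det).ker).map
        (pgl n F) := by
  rintro _ ⟨g, ⟨α, hg⟩, rfl⟩
  obtain ⟨k, rfl⟩ := hnodd
  have hh : (h : Matrix (Fin (2 * k + 1)) (Fin (2 * k + 1)) F).det ≠ 0 :=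
    (GeneralLinearGroup.det h).ne_zero
  have hd0 : (g : Matrix (Fin (2 * k + 1)) (Fin (2 * k + 1)) F).det ≠ 0 :=
    (GeneralLinearGroup.det g).ne_zero
  have hα : (α : F) ≠ 0 := α.ne_zero
  set d := (g : Matrix (Fin (2 * k + 1)) (Fin (2 * k + 1)) F).det with hd
  have hd2 : d ^ 2 = (α : F) ^ (2 * k + 1) := by
    have := congrArg Matrix.det hg
    rw [det_mul, det_mul, det_transpose, det_smul, Fintype.card_fin, ← hd] at this
    exact mul_right_cancel₀ hh (by linear_combination this)
  let c : Fˣ := Units.mk0 ((α : F) ^ k / d) (div_ne_zero (pow_ne_zero _ hα) hd0)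
  have hcv : (c : F) = (α : F) ^ k / d := rfl
  have hc1 : (c : F) ^ 2 * α = 1 := by
    rw [hcv, div_pow, hd2]
    field_simp
    ring
  have hc2 : (c : F) ^ (2 * k + 1) * d = 1 := by
    have h1 : (c : F) * d = (α : F) ^ k := by rw [hcv]; field_simp
    calc (c : F) ^ (2 * k + 1) * d = ((c : F) ^ 2) ^ k * (c * d) := by ring
      _ = ((c : F) ^ 2 * α) ^ k := by rw [h1, mul_pow]
      _ = 1 := by rw [hc1, one_pow]
  let z : GL (Fin (2 * k + 1)) F := Units.map (Matrix.scalar (Fin (2 * k + 1))).toMonoidHom c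
  have hz : z ∈ scalarSub (2 * k + 1) F := ⟨c, rfl⟩
  have hzg : ((z * g : GL (Fin (2 * k + 1)) F) : Matrix (Fin (2 * k + 1)) (Fin (2 * k + 1)) F) =
      (c : F) • (g : Matrix (Fin (2 * k + 1)) (Fin (2 * k + 1)) F) := by
    rw [Units.val_mul, smul_eq_diagonal_mul]
    rfl
  refine ⟨z * g, ⟨?_, ?_⟩, ?_⟩
  · change ((z * g : GL (Fin (2 * k + 1)) F) : Matrix (Fin (2 * k + 1)) (Fin (2 * k + 1)) F) * _ *
      ((z * g : GL (Fin (2 * k + 1)) F) : Matrix (Fin (2 * k + 1)) (Fin (2 * k + 1)) F)ᵀ = _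
    rw [hzg, transpose_smul, smul_mul_assoc, smul_mul_assoc, mul_smul_comm, hg, smul_smul,
      smul_smul, ← sq, hc1, one_smul]
  · refine MonoidHom.mem_ker.mpr (Units.ext ?_)
    change ((z * g : GL (Fin (2 * k + 1)) F) : Matrix (Fin (2 * k + 1)) (Fin (2 * k + 1)) F).det = 1
    rw [hzg, det_smul, Fintype.card_fin, ← hd, hc2]
  · have hz1 : pgl (2 * k + 1) F z = 1 := (QuotientGroup.eq_one_iff z).mpr hz
    rw [map_mul, hz1, one_mul]

/-- Let `q` be an odd prime power, `n` odd, `h ∈ GL_n(F_q)` symmetric.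
With `O(h)` the orthogonal group of `h`, `SO(h)` its determinant-one subgroup, and `S(h)`
the similitude stabilizer in `PGL_n(F_q)`, for every complex class function `χ` on
`PGL_n(F_q)`:
`⟨χ, Ind_{S(h)}(1)⟩ = ⟨χ∘π, Ind_{SO(h)}(1)⟩ = ⟨χ∘π, Ind_{O(h)}(1)⟩`. -/
theorem odd_dim_induced_characters_agree
    (F : Type) [Field F] [Fintype F] (hodd : Odd (Fintype.card F))
    (n : ℕ) (hn : 0 < n) (hnodd : Odd n) (h : GL (Fin n) F)
    (hsymm : (↑h : Matrix (Fin n) (Fin n) F)ᵀ = (↑h : Matrix (Fin n) (Fin n) F))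
    (χ : PGL n F → ℂ) (hχ : ∀ x y : PGL n F, χ (y * x * y⁻¹) = χ x) :
    innerProd χ (ind ((Sim (↑h : Matrix (Fin n) (Fin n) F)).map (pgl n F)) (fun _ => 1)) =
      innerProd (χ ∘ (pgl n F))
        (ind ((Isom (↑h : Matrix (Fin n) (Fin n) F)) ⊓
          (Matrix.GeneralLinearGroup.det).ker) (fun _ => 1)) ∧
    innerProd (χ ∘ (pgl n F))
        (ind ((Isom (↑h : Matrix (Fin n) (Fin n) F)) ⊓
          (Matrix.GeneralLinearGroup.det).ker) (fun _ => 1)) =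
      innerProd (χ ∘ (pgl n F))
        (ind (Isom (↑h : Matrix (Fin n) (Fin n) F)) (fun _ => 1)) := by
  have hO : Isom (h : Matrix (Fin n) (Fin n) F) ≤ Sim (h : Matrix (Fin n) (Fin n) F) :=
    fun g hg => ⟨1, by simpa using (show _ = _ from hg)⟩
  have hle := map_Sim_le_map_SO hnodd h
  have hSO_O := Subgroup.map_mono (f := pgl n F) (inf_le_left :
    Isom (h : Matrix (Fin n) (Fin n) F) ⊓ (Matrix.GeneralLinearGroup.det).ker ≤ _)
  have hO_S := Subgroup.map_mono (f := pgl n F) hO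
  have hχ' : ∀ x y : GL (Fin n) F, (χ ∘ pgl n F) (y * x * y⁻¹) = (χ ∘ pgl n F) x :=
    fun x y => by simp [hχ]
  rw [innerProd_ind_one _ _ hχ, innerProd_ind_one _ _ hχ', innerProd_ind_one _ _ hχ',
    subgroupAvg_comp, subgroupAvg_comp, le_antisymm hle (hSO_O.trans hO_S),
    le_antisymm (hO_S.trans hle) hSO_O]
  exact ⟨rfl, rfl⟩
end

section
/- Let q be an odd prime power, n ≥ 2 an even integer, and h ∈ GL_n(F_q) skew-symmetric (hᵗ = −h). Let S(h) = {ḡ ∈ PGL_n(F_q) : g·h·gᵗ = α·h for some α ∈ F_q^×} (this is the group PGSp_n(F_q)). Then the induced character Ind_{S(h)}^{PGL_n(F_q)}(1) is multiplicity-free: for every irreducible complex character χ of PGL_n(F_q), ⟨χ, Ind_{S(h)}^{PGL_n(F_q)}(1)⟩ ≤ 1. -/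
/-!
The proof is Gelfand's trick for the anti-automorphism `τ(g) = h gᵗ h⁻¹` of `GL_n(F)`.

For an irreducible `V`, the inner product is the dimension of the space of `S(h)`-invariants of `V`
(`innerProd_ind` and Mathlib's averaging formula). If an anti-automorphism preserves a subgroup `H`
and each of its double cosets, the Hecke operators `E ρ(g) E`, with `E` the sum of `ρ` over `H`,
commute; an eigenspace of one of them on `V^H` is stable under all the others, hence everything,
so they all act by scalars and `dim V^H ≤ 1` (`gelfand`). The representation is pulled back to
`GL_n(F)`, so that only `GL_n(F)` and `Sim h` occur there.

It remains to see `τ(g) ∈ Sp g Sp` (`adj_mem_doubleCoset`). Put `X = g τ(g)`, which satisfies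
`τ(X) = X`. Suppose `z` commutes with `X` and `z τ(z) = X`. Then `k = g⁻¹ z` and `k' = τ(g) z⁻¹` are
isometries of `h`, and `k g k' = g⁻¹ z X z⁻¹ = g⁻¹ X = τ(g)`.

Such a `z` exists because the space `V` with an alternating form for which `X` is self-adjoint is
a sum of two `X`-stable totally isotropic subspaces `W`, `W'` (`exists_hyperbolic`): take `z = 1` on
`W` and `z = X` on `W'`. The decomposition is built by induction on the dimension. Since `2 ≠ 0`,
every cyclic subspace `F[X] u` is totally isotropic. If `p` is an irreducible factor of the minimal
polynomial `p ^ (k + 1) * r` of `X`, suitable `u`, `v` in the image of `r(X)` span cyclic subspaces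
in perfect duality under the form (`exists_perfect_pair`), so `F[X] u + F[X] v` is nondegenerate
and splits off with an `X`-stable orthogonal complement.
-/

open Matrix
/-! ### Alternating forms with a self-adjoint operator -/

section LA
open Polynomial
variable {F : Type} [Field F]

lemma aeval_selfAdjoint {V : Type} [AddCommGroup V] [Module F V]
    (f : LinearMap.BilinForm F V) (X : Module.End F V) (hX : ∀ u v, f (X u) v = f u (X v))
    (a : F[X]) (u v : V) : f (aeval X a u) v = f u (aeval X a v) := by
  induction a using Polynomial.induction_on' generalizing u v with
  | add a b ha hb => simp [ha, hb]
  | monomial n c =>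
    have : ∀ u v, f ((X ^ n) u) v = f u ((X ^ n) v) := by
      induction n with
      | zero => simp
      | succ n ih => intro u v; rw [pow_succ, Module.End.mul_apply, ih, hX, ← Module.End.mul_apply,
          ← pow_succ', pow_succ]
    simp [aeval_monomial, Module.algebraMap_end_apply, this]

/-- The cyclic subspace `F[X] u` generated by `u` under the operator `X`. -/
noncomputable def cyc {V : Type} [AddCommGroup V] [Module F V] (X : Module.End F V) (u : V) : Submodule F V :=
  LinearMap.range ((LinearMap.applyₗ (R := F) u) ∘ₗ (aeval X).toLinearMap)

lemma mem_cyc {V : Type} [AddCommGroup V] [Module F V] {X : Module.End F V} {u x : V} :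
    x ∈ cyc X u ↔ ∃ a : F[X], aeval X a u = x := by
  simp [cyc, LinearMap.mem_range]

lemma cyc_stable {V : Type} [AddCommGroup V] [Module F V] {X : Module.End F V} {u x : V}
    (hx : x ∈ cyc X u) : X x ∈ cyc X u := by
  obtain ⟨a, rfl⟩ := mem_cyc.1 hx
  exact mem_cyc.2 ⟨Polynomial.X * a, by simp⟩

/-- For an alternating form, `f (a(X) u) (b(X) u)` is symmetric in `a`, `b` by self-adjointness and
antisymmetric, so it vanishes when `2 ≠ 0`. -/
lemma cyc_isotropic (h2 : (2 : F) ≠ 0) {V : Type} [AddCommGroup V] [Module F V]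
    (f : LinearMap.BilinForm F V) (hf : f.IsAlt)
    (X : Module.End F V) (hX : ∀ u v, f (X u) v = f u (X v)) {u x y : V}
    (hx : x ∈ cyc X u) (hy : y ∈ cyc X u) : f x y = 0 := by
  obtain ⟨a, rfl⟩ := mem_cyc.1 hx
  obtain ⟨b, rfl⟩ := mem_cyc.1 hy
  have h1 : f (aeval X a u) (aeval X b u) = f (aeval X b u) (aeval X a u) := by
    rw [aeval_selfAdjoint f X hX a, aeval_selfAdjoint f X hX b, ← Module.End.mul_apply,
      ← Module.End.mul_apply, ← map_mul, ← map_mul, mul_comm]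
  have h3 := hf.neg_eq (aeval X a u) (aeval X b u)
  have : (2 : F) * f (aeval X a u) (aeval X b u) = 0 := by linear_combination h1 - h3
  simpa [h2] using this


lemma exists_bezout_pow {p : F[X]} (hp : Irreducible p) (k : ℕ) {a : F[X]}
    (ha : ¬ p ^ (k + 1) ∣ a) : ∃ b c : F[X], b * a + c * p ^ (k + 1) = p ^ k := by
  classical
  obtain ⟨i, hi, e⟩ := (dvd_prime_pow hp.prime _).1 (EuclideanDomain.gcd_dvd_right a (p ^ (k + 1)))
  have hik : i ≤ k := by
    by_contra hlt
    obtain rfl : i = k + 1 := by omega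
    exact ha (e.symm.dvd.trans (EuclideanDomain.gcd_dvd_left _ _))
  obtain ⟨t, ht⟩ := e.dvd.trans (pow_dvd_pow p hik)
  refine ⟨EuclideanDomain.gcdA a (p ^ (k + 1)) * t, EuclideanDomain.gcdB a (p ^ (k + 1)) * t, ?_⟩
  rw [ht]
  conv_rhs => rw [EuclideanDomain.gcd_eq_gcd_ab]
  ring

/-- There are `u ≠ 0` and `v` whose cyclic subspaces are in perfect duality under `f`. Both are
killed by `p ^ (k + 1)` for an irreducible `p`, and every nonzero element of `F[X] u` (or of `F[X] v`)
has a multiple equal to the socle generator `p ^ k (X) u` (or `p ^ k (X) v`), so it is enough that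
`f (p ^ k (X) u) v ≠ 0`. -/
lemma exists_perfect_pair {V : Type} [AddCommGroup V] [Module F V] [FiniteDimensional F V]
    [Nontrivial V] (f : LinearMap.BilinForm F V) (hnd : ∀ x, (∀ y, f x y = 0) → x = 0)
    (X : Module.End F V) (hX : ∀ u v, f (X u) v = f u (X v)) :
    ∃ u v : V, u ≠ 0 ∧ (∀ a : F[X], aeval X a u ≠ 0 → ∃ b : F[X],
        f (aeval X a u) (aeval X b v) ≠ 0) ∧
      (∀ a : F[X], aeval X a v ≠ 0 → ∃ b : F[X], f (aeval X b u) (aeval X a v) ≠ 0) := by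
  have hm0 : minpoly F X ≠ 0 := minpoly.ne_zero (Algebra.IsIntegral.isIntegral X)
  obtain ⟨p, hp, hpm⟩ := WfDvdMonoid.exists_irreducible_factor (minpoly.not_isUnit F X) hm0
  obtain ⟨k, r, hpr, hm⟩ := WfDvdMonoid.max_power_factor hm0 hp
  obtain ⟨k, rfl⟩ : ∃ l, k = l + 1 := by
    refine Nat.exists_eq_succ_of_ne_zero ?_
    rintro rfl
    rw [hm, pow_zero, one_mul] at hpm
    exact hpr hpm
  have hr0 : r ≠ 0 := by rintro rfl; simp at hpr
  have hne : aeval X (r * p ^ k * r) ≠ 0 := by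
    intro h0
    have h1 := minpoly.dvd F X h0
    rw [hm, show p ^ (k + 1) * r = p ^ k * r * p by ring,
      show r * p ^ k * r = p ^ k * r * r by ring] at h1
    exact hpr ((mul_dvd_mul_iff_left (mul_ne_zero (pow_ne_zero _ hp.ne_zero) hr0)).1 h1)
  obtain ⟨y, hy⟩ : ∃ y, aeval X (r * p ^ k * r) y ≠ 0 := by
    by_contra! h
    exact hne (LinearMap.ext h)
  obtain ⟨w, hw⟩ : ∃ w, f (aeval X (r * p ^ k * r) y) w ≠ 0 := by
    by_contra! h
    exact hy (hnd _ h)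
  have kill : ∀ (x : V) (a : F[X]), aeval X a (aeval X r x) ≠ 0 → ¬ p ^ (k + 1) ∣ a := by
    rintro x a ha ⟨c, rfl⟩
    apply ha
    rw [← Module.End.mul_apply, ← map_mul, show p ^ (k + 1) * c * r = c * (p ^ (k + 1) * r) by ring,
      ← hm]
    simp
  have socle : ∀ (x : V) (a : F[X]), aeval X a (aeval X r x) ≠ 0 →
      ∃ b : F[X], aeval X b (aeval X a (aeval X r x)) = aeval X (p ^ k * r) x := by
    intro x a ha
    obtain ⟨b, c, hbc⟩ := exists_bezout_pow hp k (kill x a ha)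
    refine ⟨b, ?_⟩
    rw [← Module.End.mul_apply, ← Module.End.mul_apply, ← map_mul, ← map_mul, ← hbc,
      show (b * a + c * p ^ (k + 1)) * r = b * (a * r) + c * (p ^ (k + 1) * r) by ring, ← hm]
    simp
  have hadj := aeval_selfAdjoint f X hX
  refine ⟨aeval X r y, aeval X r w, ?_, ?_, ?_⟩
  · intro h0
    apply hy
    rw [map_mul, Module.End.mul_apply, h0, map_zero]
  · intro a ha
    obtain ⟨b, hb⟩ := socle y a ha
    refine ⟨b, ?_⟩
    rw [← hadj, hb, ← hadj, ← Module.End.mul_apply, ← map_mul, ← mul_assoc]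
    exact hw
  · intro a ha
    obtain ⟨b, hb⟩ := socle w a ha
    refine ⟨b, ?_⟩
    rw [hadj, hb, hadj, ← Module.End.mul_apply, ← map_mul, ← hadj,
      show r * (p ^ k * r) = r * p ^ k * r by ring]
    exact hw

/-- A space with a nondegenerate alternating form and a self-adjoint operator `X` is the sum of two
`X`-stable totally isotropic subspaces. (Directness of the sum is then automatic.) -/
theorem exists_hyperbolic (h2 : (2 : F) ≠ 0) (d : ℕ) :
    ∀ (V : Type) [AddCommGroup V] [Module F V] [FiniteDimensional F V]
      (f : LinearMap.BilinForm F V) (X : Module.End F V), Module.finrank F V = d → f.IsAlt →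
      (∀ x, (∀ y, f x y = 0) → x = 0) → (∀ u v, f (X u) v = f u (X v)) →
      ∃ W W' : Submodule F V, W ⊔ W' = ⊤ ∧ (∀ x ∈ W, X x ∈ W) ∧ (∀ x ∈ W', X x ∈ W') ∧
        (∀ x ∈ W, ∀ y ∈ W, f x y = 0) ∧ (∀ x ∈ W', ∀ y ∈ W', f x y = 0) := by
  induction d using Nat.strong_induction_on with
  | _ d ih =>
  intro V _ _ _ f X hd hf hnd hX
  rcases subsingleton_or_nontrivial V with hV | hV
  · refine ⟨⊥, ⊥, Subsingleton.elim _ _, ?_, ?_, ?_, ?_⟩ <;> simp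
  obtain ⟨u, v, hu, huv, hvu⟩ := exists_perfect_pair f hnd X hX
  have iso : ∀ {w x y : V}, x ∈ cyc X w → y ∈ cyc X w → f x y = 0 :=
    fun hx hy => cyc_isotropic h2 f hf X hX hx hy
  have hrefl : f.IsRefl := hf.isRefl
  set U := cyc X u ⊔ cyc X v with hU
  set N := f.orthogonal U with hN
  have hNmem : ∀ {n x}, n ∈ N → x ∈ U → f x n = 0 := fun hn hx => hn _ hx
  have hdisj : Disjoint U N := by
    rw [Submodule.disjoint_def]
    intro x hxU hxN
    obtain ⟨x1, hx1, x2, hx2, rfl⟩ := Submodule.mem_sup.1 hxU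
    have e1 : x1 = 0 := by
      obtain ⟨a, rfl⟩ := mem_cyc.1 hx1
      by_contra hne
      obtain ⟨b, hb⟩ := huv a hne
      have hbv : aeval X b v ∈ cyc X v := mem_cyc.2 ⟨b, rfl⟩
      have := hrefl _ _ (hNmem hxN (Submodule.mem_sup_right hbv))
      rw [map_add, LinearMap.add_apply, iso hx2 hbv, add_zero] at this
      exact hb this
    have e2 : x2 = 0 := by
      obtain ⟨a, rfl⟩ := mem_cyc.1 hx2
      by_contra hne
      obtain ⟨b, hb⟩ := hvu a hne
      have hbu : aeval X b u ∈ cyc X u := mem_cyc.2 ⟨b, rfl⟩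
      have := hNmem hxN (Submodule.mem_sup_left hbu)
      rw [map_add, iso hbu hx1, zero_add] at this
      exact hb this
    rw [e1, e2, add_zero]
  have hcompl : IsCompl U N := (LinearMap.BilinForm.isCompl_orthogonal_iff_disjoint hrefl).2 hdisj
  have hUX : ∀ x ∈ U, X x ∈ U := by
    intro x hx
    obtain ⟨x1, hx1, x2, hx2, rfl⟩ := Submodule.mem_sup.1 hx
    rw [map_add]
    exact add_mem (Submodule.mem_sup_left (cyc_stable hx1))
      (Submodule.mem_sup_right (cyc_stable hx2))
  have hNX : ∀ x ∈ N, X x ∈ N := fun x hx y hy => by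
    change f y (X x) = 0
    rw [← hX]; exact hNmem hx (hUX y hy)
  have huU : u ∈ U := Submodule.mem_sup_left (mem_cyc.2 ⟨1, by simp⟩)
  have hlt : Module.finrank F N < d := by
    rw [← hd]
    refine Submodule.finrank_lt fun htop => hu ?_
    exact Submodule.disjoint_def.1 hdisj u huU (htop ▸ Submodule.mem_top)
  obtain ⟨W, W', hsup, hWX, hWX', hW, hW'⟩ := ih _ hlt N (f.restrict N) (X.restrict hNX) rfl
    (fun x => hf x)
    (fun x hx => by
      apply Subtype.ext
      refine hnd _ fun y => ?_
      have hy : y ∈ U ⊔ N := by rw [hcompl.sup_eq_top]; trivial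
      obtain ⟨y1, hy1, y2, hy2, rfl⟩ := Submodule.mem_sup.1 hy
      rw [map_add, hrefl _ _ (hNmem x.2 hy1), zero_add]
      exact hx ⟨y2, hy2⟩)
    (fun x y => hX x y)
  have stab : ∀ (w : V) (W : Submodule F N), (∀ x ∈ W, X.restrict hNX x ∈ W) →
      ∀ x ∈ cyc X w ⊔ W.map N.subtype, X x ∈ cyc X w ⊔ W.map N.subtype := by
    intro w W hW x hx
    obtain ⟨x1, hx1, _, ⟨x2, hx2, rfl⟩, rfl⟩ := Submodule.mem_sup.1 hx
    rw [map_add]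
    exact add_mem (Submodule.mem_sup_left (cyc_stable hx1))
      (Submodule.mem_sup_right ⟨_, hW x2 hx2, rfl⟩)
  have isot : ∀ (w : V) (W : Submodule F N), cyc X w ≤ U →
      (∀ x ∈ W, ∀ y ∈ W, f.restrict N x y = 0) →
      ∀ x ∈ cyc X w ⊔ W.map N.subtype, ∀ y ∈ cyc X w ⊔ W.map N.subtype, f x y = 0 := by
    intro w W hw hW x hx y hy
    obtain ⟨x1, hx1, _, ⟨x2, hx2, rfl⟩, rfl⟩ := Submodule.mem_sup.1 hx
    obtain ⟨y1, hy1, _, ⟨y2, hy2, rfl⟩, rfl⟩ := Submodule.mem_sup.1 hy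
    have h1 : f x1 y2 = 0 := hNmem y2.2 (hw hx1)
    have h3 : f x2 y1 = 0 := hrefl _ _ (hNmem x2.2 (hw hy1))
    have h4 : f x2 y2 = 0 := hW x2 hx2 y2 hy2
    simp [iso hx1 hy1, h1, h3, h4]
  refine ⟨cyc X u ⊔ W.map N.subtype, cyc X v ⊔ W'.map N.subtype, ?_, stab u W hWX, stab v W' hWX',
    isot u W le_sup_left hW, isot v W' le_sup_right hW'⟩
  rw [sup_sup_sup_comm, ← Submodule.map_sup, hsup, Submodule.map_top, Submodule.range_subtype]
  exact hcompl.sup_eq_top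

/-- A self-adjoint `X` has the form `z* z`, with `z*` the adjoint of `z` for the alternating form,
for some `z` commuting with `X`. -/
theorem exists_sqrt (h2 : (2 : F) ≠ 0) {V : Type} [AddCommGroup V] [Module F V]
    [FiniteDimensional F V] (f : LinearMap.BilinForm F V) (X : Module.End F V) (hf : f.IsAlt)
    (hnd : ∀ x, (∀ y, f x y = 0) → x = 0) (hX : ∀ u v, f (X u) v = f u (X v)) :
    ∃ z : Module.End F V, z * X = X * z ∧ ∀ x y, f (z x) (z y) = f (X x) y := by
  obtain ⟨W, W', hsup, hWX, hWX', hW, hW'⟩ := exists_hyperbolic h2 _ V f X rfl hf hnd hX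
  have mem : ∀ y, ∃ y1 ∈ W, ∃ y2 ∈ W', y1 + y2 = y := fun y =>
    Submodule.mem_sup.1 (hsup ▸ Submodule.mem_top)
  have hc : IsCompl W W' := by
    refine ⟨Submodule.disjoint_def.2 fun x hx hx' => hnd x fun y => ?_, codisjoint_iff.2 hsup⟩
    obtain ⟨y1, hy1, y2, hy2, rfl⟩ := mem y
    rw [map_add, hW x hx y1 hy1, hW' x hx' y2 hy2, add_zero]
  set z := LinearMap.ofIsCompl hc W.subtype (X ∘ₗ W'.subtype) with hz
  have z1 : ∀ x ∈ W, z x = x := fun x hx => LinearMap.ofIsCompl_apply_left hc ⟨x, hx⟩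
  have z2 : ∀ x ∈ W', z x = X x := fun x hx => LinearMap.ofIsCompl_apply_right hc ⟨x, hx⟩
  refine ⟨z, LinearMap.ext fun x => ?_, fun x y => ?_⟩
  · obtain ⟨x1, hx1, x2, hx2, rfl⟩ := mem x
    simp [z1 x1 hx1, z2 x2 hx2, z1 _ (hWX x1 hx1), z2 _ (hWX' x2 hx2)]
  · obtain ⟨x1, hx1, x2, hx2, rfl⟩ := mem x
    obtain ⟨y1, hy1, y2, hy2, rfl⟩ := mem y
    simp [z1 x1 hx1, z2 x2 hx2, z1 y1 hy1, z2 y2 hy2, hW x1 hx1 y1 hy1, hW x1 hx1 _ (hWX y1 hy1),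
      hW' _ (hWX' x2 hx2) y2 hy2, hW' _ (hWX' x2 hx2) _ (hWX' y2 hy2), hX x1]
end LA

/-- Matrix form of `exists_sqrt`, for the form `x ↦ y ↦ xᵗ h y` and the operator `Xᵗ`. -/
lemma exists_matrix_sqrt {F : Type} [Field F] (h2 : (2 : F) ≠ 0) {n : ℕ}
    (h X : Matrix (Fin n) (Fin n) F) (hskew : hᵀ = -h) (hdet : IsUnit h)
    (hX : X * h = h * Xᵀ) :
    ∃ z : Matrix (Fin n) (Fin n) F, z * X = X * z ∧ z * h * zᵀ = X * h := by
  have hap : ∀ x y, Matrix.toBilin' h x y = x ⬝ᵥ h *ᵥ y := Matrix.toBilin'_apply' h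
  have hanti : ∀ x y, Matrix.toBilin' h x y = - Matrix.toBilin' h y x := by
    intro x y
    rw [hap, hap, dotProduct_mulVec, ← mulVec_transpose, hskew, neg_mulVec, neg_dotProduct,
      dotProduct_comm]
  obtain ⟨z, hz1, hz2⟩ := exists_sqrt h2 (Matrix.toBilin' h) (Matrix.toLin' Xᵀ)
    (fun x => by
      have := hanti x x
      have h3 : (2 : F) * Matrix.toBilin' h x x = 0 := by linear_combination this
      simpa [h2] using h3)
    (fun x hx => by
      have : h *ᵥ x = 0 := by
        refine dotProduct_eq_zero _ fun y => ?_
        rw [dotProduct_comm, ← hap, hanti, hx, neg_zero]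
      exact (Matrix.mulVec_injective_iff_isUnit.2 hdet) (by rw [this, mulVec_zero]))
    (fun u v => by
      rw [hap, hap, toLin'_apply, toLin'_apply, mulVec_mulVec, ← hX, ← mulVec_mulVec,
        dotProduct_mulVec u X, ← mulVec_transpose])
  obtain ⟨w, rfl⟩ := Matrix.toLin'.surjective z
  refine ⟨wᵀ, ?_, ?_⟩
  · rw [Module.End.mul_eq_comp, Module.End.mul_eq_comp, ← Matrix.toLin'_mul,
      ← Matrix.toLin'_mul] at hz1
    have := Matrix.toLin'.injective hz1
    have := congrArg Matrix.transpose this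
    simpa [transpose_mul] using this.symm
  · apply Matrix.toBilin'.injective
    refine LinearMap.ext₂ fun x y => ?_
    have := hz2 x y
    rw [hap, hap, toLin'_apply, toLin'_apply, toLin'_apply] at this
    rw [toBilin'_apply', toBilin'_apply', ← mulVec_mulVec, ← mulVec_mulVec, ← mulVec_mulVec,
      transpose_transpose, dotProduct_mulVec, vecMul_transpose, this, dotProduct_mulVec x X,
      ← mulVec_transpose]

/-! ### Gelfand's trick -/

open scoped Classical in
/-- Frobenius reciprocity for the trivial character of `H` and a class function `χ`. -/
lemma innerProd_ind {G : Type*} [Group G] [Fintype G] (H : Subgroup G) (χ : G → ℂ)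
    (hχ : ∀ x y, χ (y * x * y⁻¹) = χ x) :
    innerProd χ (ind H (fun _ => 1)) = (Nat.card H : ℂ)⁻¹ * ∑ k : H, χ k := by
  have inner : ∀ y : G, ∑ x : G, χ x * (if y⁻¹ * x * y ∈ H then 1 else 0) = ∑ k : H, χ k := by
    intro y
    rw [← Equiv.sum_comp (MulAut.conj y).toEquiv]
    simp only [MulEquiv.toEquiv_eq_coe, EquivLike.coe_coe, MulAut.conj_apply, hχ]
    have : ∀ x, y⁻¹ * (y * x * y⁻¹) * y = x := fun x => by group
    simp only [this, mul_ite, mul_one, mul_zero]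
    rw [← Finset.sum_filter]
    exact Finset.sum_subtype _ (by simp) _
  have hc : (Nat.card G : ℂ) ≠ 0 := Nat.cast_ne_zero.2 Nat.card_pos.ne'
  unfold innerProd ind
  simp only [map_mul, map_inv₀, map_natCast, map_sum, apply_ite (starRingEnd ℂ), map_one, map_zero]
  have : ∀ x, χ x * ((Nat.card H : ℂ)⁻¹ * ∑ y : G, if y⁻¹ * x * y ∈ H then (1 : ℂ) else 0) =
      (Nat.card H : ℂ)⁻¹ * ∑ y : G, χ x * if y⁻¹ * x * y ∈ H then (1 : ℂ) else 0 := by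
    intro x; rw [Finset.mul_sum, Finset.mul_sum, Finset.mul_sum]
    exact Finset.sum_congr rfl fun _ _ => by ring
  simp only [this]
  rw [← Finset.mul_sum, Finset.sum_comm]
  simp only [inner]
  rw [Finset.sum_const, Finset.card_univ, ← Nat.card_eq_fintype_card, nsmul_eq_mul]
  field_simp

/-- A simple object of `FDRep` has no proper nonzero invariant subspace. -/
lemma simple_irred {G : Type} [Group G] (V : FDRep ℂ G) [CategoryTheory.Simple V]
    (S : Submodule ℂ V) (hS : ∀ g, ∀ v ∈ S, V.ρ g v ∈ S) : S = ⊥ ∨ S = ⊤ := by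
  let ρS : Representation ℂ G S :=
    (Subrepresentation.mk (ρ := V.ρ) S (fun g v hv => hS g v hv)).toRepresentation
  let i : FDRep.of ρS ⟶ V :=
    ⟨CategoryTheory.InducedCategory.homMk (ModuleCat.ofHom S.subtype), fun g => by
      ext x; rfl⟩
  have hi : CategoryTheory.Mono i := by
    apply CategoryTheory.ConcreteCategory.mono_of_injective
    exact Subtype.val_injective
  by_cases h0 : i = 0
  · left
    rw [Submodule.eq_bot_iff]
    intro x hx
    have := congrArg (fun j : FDRep.of ρS ⟶ V => j.hom.hom.hom (⟨x, hx⟩ : S)) h0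
    exact this
  · right
    have := CategoryTheory.isIso_of_mono_of_nonzero h0
    rw [eq_top_iff]
    intro x _
    have e := (FDRep.isoToLinearEquiv (CategoryTheory.asIso i)).apply_symm_apply x
    rw [← e]
    exact ((FDRep.isoToLinearEquiv (CategoryTheory.asIso i)).symm x : S).2

/-- **Gelfand's trick**: if an injective anti-endomorphism `τ` of a finite group `G` preserves `H` and
maps every `g` into `H g H`, then an irreducible complex representation of `G` has at most a line of
`H`-invariant vectors. -/
theorem gelfand {G : Type*} [Group G] [Finite G] (H : Subgroup G) (τ : G → G)
    (hmul : ∀ a b, τ (a * b) = τ b * τ a) (hinj : Function.Injective τ)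
    (hH : ∀ k ∈ H, τ k ∈ H) (hdc : ∀ g, ∃ k ∈ H, ∃ k' ∈ H, τ g = k * g * k')
    {V : Type*} [AddCommGroup V] [Module ℂ V] [FiniteDimensional ℂ V] (ρ : Representation ℂ G V)
    (hirr : ∀ S : Submodule ℂ V, (∀ g, ∀ v ∈ S, ρ g v ∈ S) → S = ⊥ ∨ S = ⊤) :
    Module.finrank ℂ (Representation.invariants (ρ.comp H.subtype)) ≤ 1 := by
  classical
  have := Fintype.ofFinite H
  set E : Module.End ℂ V := ∑ k : H, ρ k with hE
  have hEl : ∀ k ∈ H, ρ k * E = E := by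
    intro k hk
    rw [hE, Finset.mul_sum, ← Equiv.sum_comp (Equiv.mulLeft (⟨k, hk⟩ : H)) (fun k : H => ρ k)]
    simp
  have hEr : ∀ k ∈ H, E * ρ k = E := by
    intro k hk
    rw [hE, Finset.sum_mul, ← Equiv.sum_comp (Equiv.mulRight (⟨k, hk⟩ : H)) (fun k : H => ρ k)]
    simp
  have hQ : ∀ g, E * ρ (τ g) * E = E * ρ g * E := by
    intro g
    obtain ⟨k, hk, k', hk', e⟩ := hdc g
    rw [e, map_mul, map_mul, ← mul_assoc, ← mul_assoc, hEr k hk, mul_assoc, hEl k' hk']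
  let t : H ≃ H := Equiv.ofBijective (fun k => ⟨τ k, hH k k.2⟩)
    (Finite.injective_iff_bijective.1 fun a b hab =>
      Subtype.ext (hinj (congrArg Subtype.val hab)))
  have hexp : ∀ a b, E * ρ a * E * ρ b * E = ∑ k : H, E * ρ (a * k * b) * E := by
    intro a b
    conv_lhs => rw [show E * ρ a * E * ρ b * E = E * ρ a * (∑ k : H, ρ k) * ρ b * E from rfl]
    simp only [Finset.mul_sum, Finset.sum_mul, map_mul, mul_assoc]
  have hcomm : ∀ a b, E * ρ a * E * ρ b * E = E * ρ b * E * ρ a * E := by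
    intro a b
    calc E * ρ a * E * ρ b * E = ∑ k : H, E * ρ (a * k * b) * E := hexp a b
      _ = ∑ k : H, E * ρ (τ b * (t k : H) * τ a) * E := by
        refine Finset.sum_congr rfl fun k _ => ?_
        rw [← hQ, hmul, hmul, ← mul_assoc]; rfl
      _ = ∑ k : H, E * ρ (τ b * k * τ a) * E :=
        Equiv.sum_comp t (fun k : H => E * ρ (τ b * k * τ a) * E)
      _ = E * ρ b * (E * ρ (τ a) * E) := by rw [← hexp, hQ]; simp only [mul_assoc]
      _ = E * ρ b * E * ρ a * E := by rw [hQ]; simp only [mul_assoc]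
  set I := Representation.invariants (ρ.comp H.subtype) with hI
  have hIE : ∀ v, E v ∈ I := fun v k => by
    change ρ k (E v) = E v
    rw [← Module.End.mul_apply, hEl k k.2]
  have hEI : ∀ v ∈ I, E v = (Fintype.card H : ℂ) • v := by
    intro v hv
    have : ∀ k : H, ρ k v = v := fun k => hv k
    simp [hE, LinearMap.sum_apply, this, ← Nat.cast_smul_eq_nsmul ℂ]
  have hc : (Fintype.card H : ℂ) ≠ 0 := Nat.cast_ne_zero.2 Fintype.card_ne_zero
  have hcomm' : ∀ a b, ∀ v ∈ I, E (ρ a (E (ρ b v))) = E (ρ b (E (ρ a v))) := by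
    intro a b v hv
    have h1 := LinearMap.congr_fun (hcomm a b) v
    simp only [Module.End.mul_apply, hEI v hv, map_smul] at h1
    exact smul_right_injective V hc h1
  -- By irreducibility, every nonzero invariant vector is cyclic for the Hecke operators.
  have hspan : ∀ v ∈ I, v ≠ 0 → ∀ x ∈ I, x ∈ Submodule.span ℂ (Set.range fun g => E (ρ g v)) := by
    intro v hv hv0 x hx
    have htop : Submodule.span ℂ (Set.range fun g => ρ g v) = ⊤ := by
      refine (hirr _ fun g w hw => ?_).resolve_left fun hbot => hv0 ?_
      · induction hw using Submodule.span_induction with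
        | mem w hw =>
          obtain ⟨g', rfl⟩ := hw
          exact Submodule.subset_span ⟨g * g', by simp⟩
        | zero => simp
        | add a b _ _ ha hb => rw [map_add]; exact add_mem ha hb
        | smul c a _ ha => rw [map_smul]; exact Submodule.smul_mem _ _ ha
      · have : v ∈ Submodule.span ℂ (Set.range fun g => ρ g v) :=
          Submodule.subset_span ⟨1, by simp⟩
        rwa [hbot, Submodule.mem_bot] at this
    have h1 : E x ∈ (Submodule.span ℂ (Set.range fun g => ρ g v)).map E :=
      ⟨x, by rw [htop]; trivial, rfl⟩
    rw [Submodule.map_span, ← Set.range_comp, hEI x hx] at h1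
    have h3 := Submodule.smul_mem _ (Fintype.card H : ℂ)⁻¹ h1
    rwa [smul_smul, inv_mul_cancel₀ hc, one_smul] at h3
  rcases subsingleton_or_nontrivial I with hs | hs
  · rw [Module.finrank_zero_of_subsingleton]; exact zero_le_one
  -- An eigenvector of one Hecke operator is cyclic, so that operator is scalar by commutation.
  have hscal : ∀ g, ∃ c : ℂ, ∀ x ∈ I, E (ρ g x) = c • x := by
    intro g
    obtain ⟨c, hcv⟩ := Module.End.exists_eigenvalue
      ((E * ρ g).restrict (p := I) (q := I) fun v _ => hIE _)
    obtain ⟨w, hw⟩ := hcv.exists_hasEigenvector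
    have hw1 : E (ρ g w) = c • (w : V) := congrArg Subtype.val hw.apply_eq_smul
    refine ⟨c, fun x hx => ?_⟩
    have hxs := hspan w w.2 (fun h => hw.2 (Subtype.ext h)) x hx
    have hle : Submodule.span ℂ (Set.range fun b => E (ρ b w)) ≤
        LinearMap.ker (E * ρ g - c • (1 : Module.End ℂ V)) := by
      rw [Submodule.span_le]
      rintro _ ⟨b, rfl⟩
      simp [LinearMap.mem_ker, hcomm' g b w w.2, hw1]
    simpa [sub_eq_zero] using hle hxs
  obtain ⟨v, hv0⟩ := exists_ne (0 : I)
  refine finrank_le_one v fun x => ?_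
  have hx := hspan v v.2 (fun h => hv0 (Subtype.ext h)) x x.2
  have : Submodule.span ℂ (Set.range fun g => E (ρ g v)) ≤ Submodule.span ℂ {(v : V)} := by
    rw [Submodule.span_le]
    rintro _ ⟨g, rfl⟩
    obtain ⟨c, hcg⟩ := hscal g
    simp only [hcg v v.2]
    exact Submodule.smul_mem _ _ (Submodule.mem_span_singleton_self _)
  obtain ⟨c, hcx⟩ := Submodule.mem_span_singleton.1 (this hx)
  exact ⟨c, Subtype.ext hcx⟩

/-! ### The anti-automorphism `g ↦ h gᵗ h⁻¹` -/

/-- The transpose as a map on `GL_n(F)`. -/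
def GLT {n : ℕ} {F : Type} [Field F] (g : GL (Fin n) F) : GL (Fin n) F :=
  ⟨(g : Matrix (Fin n) (Fin n) F)ᵀ, ((g⁻¹ : GL (Fin n) F) : Matrix (Fin n) (Fin n) F)ᵀ,
    GL_transpose_mul_transpose g, by
      rw [← transpose_mul, ← Units.val_mul, mul_inv_cancel, Units.val_one, transpose_one]⟩

section GLT
variable {n : ℕ} {F : Type} [Field F]

@[simp] lemma coe_GLT (g : GL (Fin n) F) :
    (GLT g : Matrix (Fin n) (Fin n) F) = (g : Matrix (Fin n) (Fin n) F)ᵀ := rfl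

lemma GLT_mul (a b : GL (Fin n) F) : GLT (a * b) = GLT b * GLT a :=
  Units.ext (by simp [transpose_mul])

lemma GLT_GLT (a : GL (Fin n) F) : GLT (GLT a) = a := Units.ext (by simp)

lemma GLT_inv (a : GL (Fin n) F) : GLT a⁻¹ = (GLT a)⁻¹ := by
  rw [eq_inv_iff_mul_eq_one, ← GLT_mul, mul_inv_cancel]
  exact Units.ext (by simp)

lemma mem_Sim_of_isometry {h k : GL (Fin n) F} (hk : k * h * GLT k = h) :
    k ∈ Sim (h : Matrix (Fin n) (Fin n) F) := by
  refine ⟨1, ?_⟩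
  have := congrArg Units.val hk
  simpa using this

/-- A similitude `k` with factor `α` satisfies `h kᵗ h⁻¹ = α k⁻¹`. -/
lemma adj_mem_Sim {h k : GL (Fin n) F} (hk : k ∈ Sim (h : Matrix (Fin n) (Fin n) F)) :
    h * GLT k * h⁻¹ ∈ Sim (h : Matrix (Fin n) (Fin n) F) := by
  obtain ⟨α, ha⟩ := hk
  obtain ⟨β, hb⟩ := (Sim (h : Matrix (Fin n) (Fin n) F)).inv_mem ⟨α, ha⟩
  have e : ((h * GLT k * h⁻¹ : GL (Fin n) F) : Matrix (Fin n) (Fin n) F) =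
      (α : F) • ((k⁻¹ : GL (Fin n) F) : Matrix (Fin n) (Fin n) F) := by
    have h1 : (k : Matrix (Fin n) (Fin n) F) *
        ((h * GLT k * h⁻¹ : GL (Fin n) F) : Matrix (Fin n) (Fin n) F) =
        (α : F) • (1 : Matrix (Fin n) (Fin n) F) := by
      rw [Units.val_mul, Units.val_mul, coe_GLT, ← mul_assoc, ← mul_assoc, ha, smul_mul_assoc,
        ← Units.val_mul, mul_inv_cancel, Units.val_one]
    calc _ = ((k⁻¹ : GL (Fin n) F) : Matrix (Fin n) (Fin n) F) * ((k : Matrix (Fin n) (Fin n) F) *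
          ((h * GLT k * h⁻¹ : GL (Fin n) F) : Matrix (Fin n) (Fin n) F)) := by
            rw [← mul_assoc, GL_inv_mul_coe, one_mul]
      _ = _ := by rw [h1, mul_smul_comm, mul_one]
  refine ⟨α * α * β, ?_⟩
  rw [e, transpose_smul, smul_mul_assoc, smul_mul_assoc, mul_smul_comm, hb, smul_smul, smul_smul]
  simp [mul_assoc]

/-- The map `g ↦ h gᵗ h⁻¹` preserves every double coset of `Sim h`; the two factors found are in fact
isometries of `h`. -/
theorem adj_mem_doubleCoset (h2 : (2 : F) ≠ 0) {h : GL (Fin n) F}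
    (hskew : (↑h : Matrix (Fin n) (Fin n) F)ᵀ = -(↑h : Matrix (Fin n) (Fin n) F))
    (g : GL (Fin n) F) :
    ∃ k ∈ Sim (h : Matrix (Fin n) (Fin n) F), ∃ k' ∈ Sim (h : Matrix (Fin n) (Fin n) F),
      h * GLT g * h⁻¹ = k * g * k' := by
  have hT : GLT h = -h := Units.ext (by simpa using hskew)
  set X : GL (Fin n) F := g * h * GLT g * h⁻¹ with hXdef
  have hXh : X * h = g * h * GLT g := by rw [hXdef]; group
  have hXs : X * h = h * GLT X := by
    have h1 : GLT (X * h) = - (X * h) := by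
      rw [hXh, GLT_mul, GLT_mul, GLT_GLT, hT]; simp [mul_assoc]
    rw [GLT_mul, hT, neg_mul, neg_inj] at h1
    exact h1.symm
  obtain ⟨w, hw1, hw2⟩ := exists_matrix_sqrt h2 (h : Matrix (Fin n) (Fin n) F) X hskew h.isUnit
    (by simpa using congrArg Units.val hXs)
  have hwu : IsUnit w := by
    have : w * ((h : Matrix (Fin n) (Fin n) F) * wᵀ * ((X * h)⁻¹ : GL (Fin n) F)) = 1 := by
      rw [← mul_assoc, ← mul_assoc, hw2, ← Units.val_mul, ← Units.val_mul, mul_inv_cancel,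
        Units.val_one]
    exact IsUnit.of_mul_eq_one _ this
  obtain ⟨z, rfl⟩ := hwu
  have hz1 : z * X = X * z := Units.ext (by simpa using hw1)
  have hz2 : z * h * GLT z = X * h := Units.ext (by simpa using hw2)
  refine ⟨g⁻¹ * z, mem_Sim_of_isometry ?_, h * GLT g * h⁻¹ * z⁻¹, mem_Sim_of_isometry ?_, ?_⟩
  · rw [GLT_mul, GLT_inv]
    calc g⁻¹ * z * h * (GLT z * (GLT g)⁻¹) = g⁻¹ * (z * h * GLT z) * (GLT g)⁻¹ := by group
      _ = h := by rw [hz2, hXh]; group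
  · have h3 : z⁻¹ * h * (GLT z)⁻¹ = X⁻¹ * h := by
      have : z⁻¹ * X = X * z⁻¹ := by
        rw [inv_mul_eq_iff_eq_mul, ← mul_assoc, hz1, mul_inv_cancel_right]
      calc z⁻¹ * h * (GLT z)⁻¹ = X⁻¹ * (X * z⁻¹) * h * (GLT z)⁻¹ := by group
        _ = X⁻¹ * z⁻¹ * (X * h) * (GLT z)⁻¹ := by rw [← this]; simp only [mul_assoc]
        _ = X⁻¹ * h := by rw [← hz2]; group
    rw [GLT_mul, GLT_mul, GLT_mul, GLT_GLT, GLT_inv, GLT_inv, hT]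
    calc h * GLT g * h⁻¹ * z⁻¹ * h * ((GLT z)⁻¹ * ((-h)⁻¹ * (g * -h)))
        = h * GLT g * h⁻¹ * (z⁻¹ * h * (GLT z)⁻¹) * ((-h)⁻¹ * (g * -h)) := by group
      _ = h * GLT g * h⁻¹ * (X⁻¹ * h) * (h⁻¹ * (g * h)) := by
          rw [h3]; simp [inv_neg]
      _ = h := by rw [hXdef]; group
  · calc h * GLT g * h⁻¹ = g⁻¹ * (X * z) * z⁻¹ := by rw [hXdef]; group
      _ = g⁻¹ * (z * X) * z⁻¹ := by rw [hz1]
      _ = g⁻¹ * z * g * (h * GLT g * h⁻¹ * z⁻¹) := by rw [hXdef]; group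

end GLT

open scoped ComplexOrder in
/-- Let `q` be an odd prime power, `n ≥ 2` even, `h ∈ GL_n(F_q)`
skew-symmetric.  With `S(h)` the stabilizer `PGSp_n(F_q)` in `PGL_n(F_q)`, the induced
character `Ind_{S(h)}^{PGL_n(F_q)}(1)` is multiplicity-free: for every irreducible complex
character `χ` of `PGL_n(F_q)`, `⟨χ, Ind_{S(h)}(1)⟩ ≤ 1`. -/
theorem pgsp_induced_multiplicity_free
    (F : Type) [Field F] [Fintype F] (hodd : Odd (Fintype.card F))
    (n : ℕ) (hn2 : 2 ≤ n) (hneven : Even n) (h : GL (Fin n) F)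
    (hskew : (↑h : Matrix (Fin n) (Fin n) F)ᵀ = -(↑h : Matrix (Fin n) (Fin n) F))
    (χ : PGL n F → ℂ)
    (hχ : ∃ V : FDRep ℂ (PGL n F), CategoryTheory.Simple V ∧ χ = V.character) :
    innerProd χ
        (ind ((Sim (↑h : Matrix (Fin n) (Fin n) F)).map (pgl n F)) (fun _ => 1)) ≤ 1 := by
  classical
  obtain ⟨V, hV, rfl⟩ := hχ
  have h2 : (2 : F) ≠ 0 := by
    refine Ring.two_ne_zero fun hchar => ?_
    have := FiniteField.even_card_of_char_two hchar
    rw [Nat.odd_iff] at hodd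
    omega
  set H := (Sim (↑h : Matrix (Fin n) (Fin n) F)).map (pgl n F) with hH
  have hcard : (Nat.card H : ℂ) ≠ 0 := Nat.cast_ne_zero.2 Nat.card_pos.ne'
  have := invertibleOfNonzero hcard
  rw [innerProd_ind H _ fun x y => V.char_conj x y]
  have key := Representation.card_inv_mul_sum_char_eq_finrank
    (ρ := (V.ρ.comp H.subtype : Representation ℂ H V))
  have hle : Module.finrank ℂ (Representation.invariants (V.ρ.comp H.subtype)) ≤ 1 := by
    refine le_trans (Submodule.finrank_mono ?_) (gelfand (Sim (h : Matrix (Fin n) (Fin n) F))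
      (fun g => h * GLT g * h⁻¹) (fun a b => ?_) (fun a b hab => ?_) (fun k hk => adj_mem_Sim hk)
      (adj_mem_doubleCoset h2 hskew) (V.ρ.comp (pgl n F)) fun S hS => ?_)
    · intro v hv k
      exact hv ⟨pgl n F k, Subgroup.mem_map_of_mem _ k.2⟩
    · simp only [GLT_mul]; group
    · have : GLT a = GLT b := by simpa using hab
      rw [← GLT_GLT a, this, GLT_GLT]
    · refine simple_irred V S fun g v hv => ?_
      obtain ⟨g, rfl⟩ := QuotientGroup.mk'_surjective _ g
      exact hS g v hv
  calc _ = (Module.finrank ℂ (Representation.invariants (V.ρ.comp H.subtype)) : ℂ) := by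
        rw [← key]; rfl
    _ ≤ 1 := by exact_mod_cast hle
end

section
/- Let q be a prime power with q ≡ 1 (mod 4) and n a positive integer with n ≡ 2 (mod 4). Let h ∈ GL_n(F_q) with hᵗ = h or hᵗ = −h, and suppose g ∈ GL_n(F_q) and α ∈ F_q^× satisfy g·h·gᵗ = α·h. Then α is a square in F_q^× if and only if det(g) is a square in F_q^×. (Equivalently, the homomorphism ω on the stabilizer S(h) with kernel S₀(h) is the restriction of the character ḡ ↦ (Legendre symbol of det g) of PGL_n(F_q).) -/
/-!
Taking determinants in `g * h * gᵀ = α • h` and cancelling `det h` gives `(det g)² = αⁿ`. Writing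
`n = 2 * (2 * k + 1)`, this says `det g = ± α ^ (2 * k + 1) = ± α * (α ^ k)²`. Since `q ≡ 1 (mod 4)`,
`-1` is a square, so `α` and `det g` differ by a nonzero square.
-/

open Matrix

/-- Let `q ≡ 1 (mod 4)` be a prime power and `n ≡ 2 (mod 4)` a positive
integer. If `h ∈ GL_n(F_q)` satisfies `hᵗ = ±h` and `g ∈ GL_n(F_q)`, `α ∈ F_q^×` satisfy
`g·h·gᵗ = α·h`, then `α` is a square in `F_q^×` if and only if `det g` is a square in
`F_q^×`. -/
theorem square_factor_iff_square_det
    (F : Type) [Field F] [Fintype F] (hq : Fintype.card F % 4 = 1)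
    (n : ℕ) (hn : 0 < n) (hn4 : n % 4 = 2) (h g : GL (Fin n) F)
    (hsymm : (↑h : Matrix (Fin n) (Fin n) F)ᵀ = (↑h : Matrix (Fin n) (Fin n) F) ∨
             (↑h : Matrix (Fin n) (Fin n) F)ᵀ = -(↑h : Matrix (Fin n) (Fin n) F))
    (α : Fˣ)
    (hrel : (↑g : Matrix (Fin n) (Fin n) F) * (↑h : Matrix (Fin n) (Fin n) F) *
      (↑g : Matrix (Fin n) (Fin n) F)ᵀ = (α : F) • (↑h : Matrix (Fin n) (Fin n) F)) :
    (∃ β : Fˣ, β ^ 2 = α) ↔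
      (∃ γ : Fˣ, (γ : F) ^ 2 = (↑g : Matrix (Fin n) (Fin n) F).det) := by
  obtain ⟨k, rfl⟩ : ∃ k, n = 2 * (2 * k + 1) := ⟨n / 4, by omega⟩
  set d : F := g.val.det with hd
  have hh : (↑h : Matrix (Fin (2 * (2 * k + 1))) (Fin (2 * (2 * k + 1))) F).det ≠ 0 :=
    ((Matrix.isUnit_iff_isUnit_det _).1 h.isUnit).ne_zero
  have hd2 : d ^ 2 = ((α : F) ^ (2 * k + 1)) ^ 2 := by
    have e := congrArg Matrix.det hrel
    rw [Matrix.det_mul, Matrix.det_mul, Matrix.det_transpose, Matrix.det_smul,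
      Fintype.card_fin, ← hd] at e
    apply mul_right_cancel₀ hh
    rw [← pow_mul, mul_comm (2 * k + 1) 2, ← e]
    ring
  -- `ε` is a unit whose square is the sign relating `det g` and `α ^ (2 * k + 1)`
  obtain ⟨ε, hε⟩ : ∃ ε : Fˣ, d = (ε : F) ^ 2 * (α : F) ^ (2 * k + 1) := by
    rcases sq_eq_sq_iff_eq_or_eq_neg.1 hd2 with e | e
    · exact ⟨1, by simp [e]⟩
    · obtain ⟨i, hi⟩ := FiniteField.isSquare_neg_one_iff.2 (by omega : Fintype.card F % 4 ≠ 3)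
      have hi0 : i ≠ 0 := by
        rintro rfl
        simp at hi
      exact ⟨Units.mk0 i hi0, by rw [e, Units.val_mk0, sq, ← hi, neg_one_mul]⟩
  constructor
  · rintro ⟨β, rfl⟩
    refine ⟨ε * β ^ (2 * k + 1), ?_⟩
    rw [hε]
    push_cast
    ring
  · rintro ⟨γ, hγ⟩
    have e : γ ^ 2 = ε ^ 2 * α ^ (2 * k + 1) := by
      ext
      push_cast
      rw [hγ, hε]
    refine ⟨γ * (ε * α ^ k)⁻¹, ?_⟩
    rw [mul_pow, inv_pow, e, mul_inv_eq_iff_eq_mul]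
    ext
    push_cast
    ring
end

section
/- Let k be an algebraically closed field, n ≥ 2 an even integer, and w a fixed-point-free involution of {1,…,n} (w² = id and w(i) ≠ i for all i). Let T ≤ GL_n(k) be the subgroup of invertible diagonal matrices and let A = {t ∈ T : there exists β ∈ k^× with t_{ii}·t_{w(i)w(i)} = β for all i}. Then the set of elements ḡ ∈ PGL_n(k) commuting with the image of every element of A in PGL_n(k) is exactly the image T̄ of T in PGL_n(k). (This is the statement that the centralizer in PGL_n(k) of T̄ ∩ (a conjugate of) PGSp_n(k) equals T̄.) -/
/-!
If `ḡ` commutes with `t̄` in `PGL_n`, then `g t = c t g` for some scalar `c ≠ 0`, so for diagonal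
`t` every nonzero entry `g_{ij}` forces `t_j = c t_i`. Suppose `g_{ij} ≠ 0` with `i ≠ j`. Take
`t ∈ A` with `t_i = x`, `t_{w(i)} = x⁻¹` and all other diagonal entries `1` (so `β = 1`), where
`x ≠ 0`, `x ^ 3 ≠ 1` and `x ^ 4 ≠ 1`. Then `c` is `x⁻¹` or `x⁻²`. Row `w(i)` of `g` has a nonzero
entry, in column `l` say, whence `t_l = c x⁻¹` is `x⁻²` or `x⁻³`; but `t_l ∈ {x, x⁻¹, 1}`, which
the choice of `x` excludes. Hence `g` is diagonal. Conversely, diagonal matrices commute.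
-/

open Matrix
theorem exists_generic (k : Type) [Field k] [Infinite k] :
    ∃ x : k, x ≠ 0 ∧ x ^ 3 ≠ 1 ∧ x ^ 4 ≠ 1 := by
  classical
  obtain ⟨x, hx⟩ := Infinite.exists_notMem_finset
    (({0} : Finset k) ∪ (Polynomial.nthRootsFinset 3 (1 : k) ∪ Polynomial.nthRootsFinset 4 (1 : k)))
  simp only [Finset.mem_union, Finset.mem_singleton, not_or,
    Polynomial.mem_nthRootsFinset (show 0 < 3 by norm_num),
    Polynomial.mem_nthRootsFinset (show 0 < 4 by norm_num)] at hx
  exact ⟨x, hx.1, hx.2.1, hx.2.2⟩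

theorem exists_row_entry_ne_zero {k : Type} [Field k] {n : ℕ} (g : GL (Fin n) k) (r : Fin n) :
    ∃ l, (g : Matrix (Fin n) (Fin n) k) r l ≠ 0 := by
  by_contra! h
  have h1 : ((g : Matrix (Fin n) (Fin n) k) * ((g⁻¹ : GL (Fin n) k) : Matrix (Fin n) (Fin n) k))
      r r = 1 := by
    rw [← Units.val_mul, mul_inv_cancel, Units.val_one, Matrix.one_apply_eq]
  simp [Matrix.mul_apply, h] at h1

/-- The invertible diagonal matrix with nonvanishing diagonal `d`. -/
def diagGL {k : Type} [Field k] {n : ℕ} (d : Fin n → k) (hd : ∀ i, d i ≠ 0) : GL (Fin n) k where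
  val := Matrix.diagonal d
  inv := Matrix.diagonal fun i => (d i)⁻¹
  val_inv := by simp [Matrix.diagonal_mul_diagonal, hd]
  inv_val := by simp [Matrix.diagonal_mul_diagonal, hd]

/-- Commutation in `PGL_n` with a diagonal class lifts to `g t = c t g`, read off entrywise. -/
theorem exists_scalar_of_commute {k : Type} [Field k] {n : ℕ} (g : GL (Fin n) k)
    (d : Fin n → k) (hd : ∀ i, d i ≠ 0)
    (h : pgl n k g * pgl n k (diagGL d hd) = pgl n k (diagGL d hd) * pgl n k g) :
    ∃ c : k, ∀ i j, (g : Matrix (Fin n) (Fin n) k) i j ≠ 0 → d j = c * d i := by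
  rw [← map_mul, ← map_mul] at h
  obtain ⟨c, hc⟩ := QuotientGroup.eq.mp h.symm
  refine ⟨c, fun i j hij => ?_⟩
  have h2 : g * diagGL d hd = diagGL d hd * g * Units.map (Matrix.scalar (Fin n)).toMonoidHom c := by
    rw [hc]; group
  have h3 := congrArg (fun u : GL (Fin n) k => (u : Matrix (Fin n) (Fin n) k) i j) h2
  simp [diagGL, Matrix.mul_diagonal, Matrix.diagonal_mul] at h3
  apply mul_left_cancel₀ hij
  linear_combination h3

/-- Let `k` be an algebraically closed field, `n ≥ 2` even, and `w` a
fixed-point-free involution of `{1,…,n}`.  Let `T ≤ GL_n(k)` be the invertible diagonal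
matrices and `A = {t ∈ T : ∃ β ∈ k^×, t_{ii}·t_{w(i)w(i)} = β for all i}`.  Then the set of
`ḡ ∈ PGL_n(k)` commuting with the image of every element of `A` is exactly the image `T̄`
of `T` in `PGL_n(k)`. -/
theorem centralizer_of_A_eq_diagonal_image
    (k : Type) [Field k] [IsAlgClosed k] (n : ℕ) (hn2 : 2 ≤ n) (hneven : Even n)
    (w : Equiv.Perm (Fin n)) (hw : ∀ i, w (w i) = i) (hwff : ∀ i, w i ≠ i) :
    {x : PGL n k | ∀ t : GL (Fin n) k,
        (↑t : Matrix (Fin n) (Fin n) k).IsDiag →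
        (∃ β : kˣ, ∀ i : Fin n,
          (↑t : Matrix (Fin n) (Fin n) k) i i *
            (↑t : Matrix (Fin n) (Fin n) k) (w i) (w i) = (β : k)) →
        x * pgl n k t = pgl n k t * x} =
      (pgl n k) '' {t : GL (Fin n) k | (↑t : Matrix (Fin n) (Fin n) k).IsDiag} := by
  ext x
  constructor
  · intro hx
    obtain ⟨g, rfl⟩ := QuotientGroup.mk'_surjective (scalarSub n k) x
    refine ⟨g, ?_, rfl⟩
    intro i j hij
    by_contra hg
    have := IsAlgClosed.instInfinite (K := k)
    obtain ⟨x, hx0, hx3, hx4⟩ := exists_generic k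
    have hx1 : x ≠ 1 := fun h => hx3 (by simp [h])
    have hx2 : x ^ 2 ≠ 1 := fun h => hx4 (by linear_combination (x ^ 2 + 1) * h)
    let d : Fin n → k := fun m => if m = i then x else if m = w i then x⁻¹ else 1
    have hd : ∀ m, d m ≠ 0 := by
      intro m
      simp only [d]
      split_ifs <;> simp [hx0]
    have hdi : d i = x := by simp [d]
    have hdw : d (w i) = x⁻¹ := by simp [d, hwff]
    have hβ : ∀ m, d m * d (w m) = 1 := by
      intro m
      by_cases h1 : m = i
      · rw [h1, hdi, hdw, mul_inv_cancel₀ hx0]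
      by_cases h2 : m = w i
      · rw [h2, hw, hdi, hdw, inv_mul_cancel₀ hx0]
      have h3 : w m ≠ i := fun h => h2 (by rw [← h, hw])
      have h4 : w m ≠ w i := fun h => h1 (w.injective h)
      simp [d, h1, h2, h3, h4]
    obtain ⟨c, hc⟩ := exists_scalar_of_commute g d hd
      (hx (diagGL d hd) (Matrix.isDiag_diagonal d) ⟨1, fun m => by simpa [diagGL] using hβ m⟩)
    have hcj := hc i j hg
    obtain ⟨l, hl⟩ := exists_row_entry_ne_zero g (w i)
    have hcl := hc (w i) l hl
    rw [hdi] at hcj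
    rw [hdw] at hcl
    have hl' : d l = x ∨ d l = x⁻¹ ∨ d l = 1 := by
      simp only [d]
      split_ifs <;> simp
    have hj' : d j = x⁻¹ ∨ d j = 1 := by
      simp only [d, if_neg hij.symm]
      split_ifs <;> simp
    -- Eliminating `c` leaves an equation in `x` alone.
    have key : d l * x ^ 2 = d j := by
      rw [hcl, hcj]
      field_simp
    rcases hl' with h | h | h <;> rcases hj' with h' | h' <;> rw [h, h'] at key <;>
      field_simp at key
    · exact hx4 (by linear_combination key)
    · exact hx3 (by linear_combination key)
    · exact hx2 (by linear_combination key)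
    · exact hx1 (by linear_combination key)
    · exact hx3 (by linear_combination key)
    · exact hx2 (by linear_combination key)
  · rintro ⟨g, hg, rfl⟩ t ht -
    rw [← map_mul, ← map_mul]
    congr 1
    apply Units.ext
    have hg' : (g : Matrix (Fin n) (Fin n) k).IsDiag := hg
    rw [Units.val_mul, Units.val_mul, ← hg'.diagonal_diag, ← ht.diagonal_diag,
      Matrix.diagonal_mul_diagonal, Matrix.diagonal_mul_diagonal]
    simp only [mul_comm]
end
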